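/- arXiv:2111.05496 — 13 statements merged into one kernel-verified Lean document; each statement's English description precedes it below -/
import Mathlib

section
/- Suppose the loss is the squared loss ℓ(ŷ, y) = ‖ŷ − y‖² and Assumption 1 holds (Σ_{n=1}^N v_L^n (y^n)^T ≠ 0 and Σ_{n=1}^N v_L^n (v_L^n)^T is invertible). Then the fixed-feature ResNEst empirical risk R(W_L, W_{L+1}) = (1/N) Σ_{n=1}^N ℓ(W_{L+1}(u^n + W_L v_L^n), y^n), viewed as a function on the product space ℝ^{M×K_L} × ℝ^{N_o×M}, is neither convex nor concave. -/
/-!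
STATEMENT 0: Under the squared loss and Assumption 1, the fixed-feature ResNEst
empirical risk `R(W_L, W_{L+1})` is neither convex nor concave on
`ℝ^{M×K_L} × ℝ^{N_o×M}`.
-/

theorem resnest_fixed_feature_risk_nonconvex_nonconcave
    (N L M No : ℕ) (hN : 0 < N) (hL : 1 ≤ L) (hM : 0 < M) (hNo : 0 < No)
    (K : ℕ → ℕ)
    -- fixed matrices W_i ∈ ℝ^{M×K_i}, i = 0, …, L−1
    (W : (i : ℕ) → Matrix (Fin M) (Fin (K i)) ℝ)
    -- feature vectors v_i^n ∈ ℝ^{K_i} and targets y^n ∈ ℝ^{N_o}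
    (v : (i : ℕ) → Fin N → Fin (K i) → ℝ)
    (y : Fin N → Fin No → ℝ)
    -- u^n = Σ_{i=0}^{L−1} W_i v_i^n
    (u : Fin N → Fin M → ℝ)
    (hu : ∀ n, u n = ∑ i ∈ Finset.range L, (W i).mulVec (v i n))
    -- squared loss ℓ(yhat, y) = ‖yhat − y‖²
    (ℓ : (Fin No → ℝ) → (Fin No → ℝ) → ℝ)
    (hℓ : ∀ yhat yy, ℓ yhat yy = ∑ j, (yhat j - yy j) ^ 2)
    -- fixed-feature ResNEst empirical risk
    (R : Matrix (Fin M) (Fin (K L)) ℝ × Matrix (Fin No) (Fin M) ℝ → ℝ)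
    (hR : ∀ p, R p =
      (1 / (N : ℝ)) * ∑ n, ℓ (p.2.mulVec (u n + p.1.mulVec (v L n))) (y n))
    -- Assumption 1: Σ_n v_L^n (y^n)^T ≠ 0 and Σ_n v_L^n (v_L^n)^T invertible
    (hA1 : (Matrix.of fun k j => ∑ n, v L n k * y n j :
        Matrix (Fin (K L)) (Fin No) ℝ) ≠ 0)
    (hA1' : IsUnit (Matrix.of fun k k' => ∑ n, v L n k * v L n k' :
        Matrix (Fin (K L)) (Fin (K L)) ℝ)) :
    ¬ ConvexOn ℝ Set.univ R ∧ ¬ ConcaveOn ℝ Set.univ R := by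
  obtain ⟨k0, j0, hc⟩ : ∃ k j, ∑ n, v L n k * y n j ≠ 0 := by
    by_contra! h
    exact hA1 (by ext k j; simpa using h k j)
  set m0 : Fin M := ⟨0, hM⟩ with hm0
  set c := ∑ n, v L n k0 * y n j0 with hcdef
  set V := ∑ n, v L n k0 ^ 2 with hV
  set U := ∑ n, u n m0 ^ 2 with hU
  set X := ∑ n, u n m0 * v L n k0 with hX
  set Z := ∑ n, u n m0 * y n j0 with hZ
  set Y := ∑ n, ∑ j, y n j ^ 2 with hY
  have hV0 : 0 < V := by
    have h0 : 0 ≤ V := Finset.sum_nonneg fun n _ => sq_nonneg _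
    rcases h0.lt_or_eq with h | h
    · exact h
    · exfalso
      apply hc
      have h2 := (Finset.sum_eq_zero_iff_of_nonneg
        (fun n _ => sq_nonneg (v L n k0))).1 h.symm
      refine Finset.sum_eq_zero fun n hn => ?_
      have := pow_eq_zero_iff (two_ne_zero) |>.1 (h2 n hn)
      rw [this, zero_mul]
  have hU0 : 0 ≤ U := Finset.sum_nonneg fun n _ => sq_nonneg _
  have hNR : (0 : ℝ) < 1 / (N : ℝ) := by positivity
  have key : ∀ a b : ℝ, R (Matrix.single m0 k0 a, Matrix.single j0 m0 b) =
      (1 / (N : ℝ)) * (b ^ 2 * U + 2 * a * b ^ 2 * X + a ^ 2 * b ^ 2 * V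
        - 2 * b * Z - 2 * a * b * c + Y) := by
    intro a b
    rw [hR]
    congr 1
    rw [hcdef, hV, hU, hX, hZ, hY]
    simp only [Finset.mul_sum, ← Finset.sum_add_distrib, ← Finset.sum_sub_distrib]
    refine Finset.sum_congr rfl fun n _ => ?_
    rw [hℓ]
    have h1 : ∀ j, ((Matrix.single j0 m0 b).mulVec
        (u n + (Matrix.single m0 k0 a).mulVec (v L n)) j - y n j) ^ 2
        = (if j = j0 then (b * (u n m0 + a * v L n k0)) ^ 2
            - 2 * (b * (u n m0 + a * v L n k0)) * y n j0 else 0) + y n j ^ 2 := by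
      intro j
      by_cases h : j = j0
      · subst h
        simp [Matrix.single_mulVec]
        ring
      · simp [Matrix.single_mulVec, h]
    simp only [h1, Finset.sum_add_distrib, Finset.sum_ite_eq', Finset.mem_univ, if_true,
      Finset.sum_ite_eq]
    ring
  have mid : ∀ a b a' b' : ℝ,
      (1 / 2 : ℝ) • ((Matrix.single m0 k0 a, Matrix.single j0 m0 b) :
        Matrix (Fin M) (Fin (K L)) ℝ × Matrix (Fin No) (Fin M) ℝ)
      + (1 / 2 : ℝ) • (Matrix.single m0 k0 a', Matrix.single j0 m0 b')
      = (Matrix.single m0 k0 ((a + a') / 2), Matrix.single j0 m0 ((b + b') / 2)) := by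
    intro a b a' b'
    simp only [Prod.smul_mk, Prod.mk_add_mk, Matrix.smul_single, ← Matrix.single_add, smul_eq_mul]
    congr 2 <;> ring
  constructor
  · intro h
    have hD : 0 < U + c ^ 2 * V + 1 := by positivity
    obtain ⟨b, hb⟩ : ∃ b, b = c ^ 2 / (U + c ^ 2 * V + 1) := ⟨_, rfl⟩
    have hc2 : 0 < c ^ 2 := by positivity
    have hb0 : 0 < b := by rw [hb]; positivity
    have hbD : b * (U + c ^ 2 * V + 1) = c ^ 2 := by rw [hb]; field_simp
    have h2 := h.2 (Set.mem_univ (Matrix.single m0 k0 c, Matrix.single j0 m0 b))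
      (Set.mem_univ (Matrix.single m0 k0 (-c), Matrix.single j0 m0 (-b)))
      (by norm_num : (0 : ℝ) ≤ 1 / 2) (by norm_num : (0 : ℝ) ≤ 1 / 2) (by norm_num)
    rw [mid, key, key, key, smul_eq_mul, smul_eq_mul] at h2
    have h3 : 0 ≤ (1 / (N : ℝ)) * (b * (b * (U + c ^ 2 * V + 1) - b - 2 * c ^ 2)) := by
      linarith
    rw [hbD] at h3
    have h4 : b * (c ^ 2 - b - 2 * c ^ 2) < 0 := mul_neg_of_pos_of_neg hb0 (by linarith)
    have h5 := mul_neg_of_pos_of_neg hNR h4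
    linarith
  · intro h
    have h2 := h.2 (Set.mem_univ (Matrix.single m0 k0 1, Matrix.single j0 m0 1))
      (Set.mem_univ (Matrix.single m0 k0 (-1), Matrix.single j0 m0 1))
      (by norm_num : (0 : ℝ) ≤ 1 / 2) (by norm_num : (0 : ℝ) ≤ 1 / 2) (by norm_num)
    rw [mid, key, key, key, smul_eq_mul, smul_eq_mul] at h2
    have h5 := mul_pos hNR hV0
    linarith
end

section
/- Suppose the loss is the squared loss ℓ(ŷ, y) = ‖ŷ − y‖² and Assumption 1 holds. Then every critical point of the fixed-feature ResNEst empirical risk R (i.e., every point where the Fréchet derivative of R vanishes) that is not a local minimizer of R is also not a local maximizer of R; that is, every critical point of R that is not a local minimizer is a saddle point. -/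
/-!
STATEMENT 1: Under the squared loss and Assumption 1, every critical point of the
fixed-feature ResNEst empirical risk `R` that is not a local minimizer is a saddle
point (i.e., not a local maximizer either).
-/

attribute [local instance] Matrix.normedAddCommGroup Matrix.normedSpace

theorem line_localMax {E : Type*} [NormedAddCommGroup E] [NormedSpace ℝ E] (R : E → ℝ) (p d : E)
    (h : IsLocalMax R p) : ∃ t : ℝ, 0 < t ∧ R (p + t • d) ≤ R p ∧ R (p + (-t) • d) ≤ R p := by
  have hc : Filter.Tendsto (fun t : ℝ => p + t • d) (nhds 0) (nhds p) := by
    have : Continuous (fun t : ℝ => p + t • d) := by fun_prop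
    simpa using this.tendsto 0
  have h1 : ∀ᶠ t : ℝ in nhds 0, R (p + t • d) ≤ R p := hc.eventually h
  obtain ⟨ε, hε, hb⟩ := Metric.eventually_nhds_iff.1 h1
  refine ⟨ε / 2, by positivity, hb ?_, hb ?_⟩
  · rw [Real.dist_eq, sub_zero, abs_of_pos (by positivity)]; linarith
  · rw [Real.dist_eq, sub_zero, abs_neg, abs_of_pos (by positivity)]; linarith

theorem sq_sum_zero {N J : ℕ} (a e : Fin N → Fin J → ℝ) (t : ℝ) (ht : 0 < t)
    (h1 : ∑ n, ∑ j, (a n j + t * e n j) ^ 2 ≤ ∑ n, ∑ j, (a n j) ^ 2)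
    (h2 : ∑ n, ∑ j, (a n j + (-t) * e n j) ^ 2 ≤ ∑ n, ∑ j, (a n j) ^ 2) :
    ∀ n j, e n j = 0 := by
  have h3 : ∑ n, ∑ j, (a n j + t * e n j) ^ 2 + ∑ n, ∑ j, (a n j + (-t) * e n j) ^ 2
      = 2 * ∑ n, ∑ j, (a n j) ^ 2 + 2 * t ^ 2 * ∑ n, ∑ j, (e n j) ^ 2 := by
    simp only [Finset.mul_sum, ← Finset.sum_add_distrib]
    refine Finset.sum_congr rfl fun n _ => Finset.sum_congr rfl fun j _ => ?_
    ring
  have h4 : ∑ n, ∑ j, (e n j) ^ 2 ≤ 0 := by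
    by_contra hh
    push Not at hh
    have : 0 < 2 * t ^ 2 * ∑ n, ∑ j, (e n j) ^ 2 := by positivity
    linarith
  intro n j
  have h5 : (e n j) ^ 2 ≤ ∑ n, ∑ j, (e n j) ^ 2 :=
    (Finset.single_le_sum (f := fun j => (e n j) ^ 2) (fun _ _ => sq_nonneg _)
      (Finset.mem_univ j)).trans
    (Finset.single_le_sum (f := fun n => ∑ j, (e n j) ^ 2)
      (fun _ _ => Finset.sum_nonneg fun _ _ => sq_nonneg _) (Finset.mem_univ n))
  exact pow_eq_zero_iff (two_ne_zero) |>.1 (le_antisymm (h5.trans h4) (sq_nonneg _))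

theorem resnest_fixed_feature_critical_not_min_is_saddle
    (N L M No : ℕ) (hN : 0 < N) (hL : 1 ≤ L) (hM : 0 < M) (hNo : 0 < No)
    (K : ℕ → ℕ)
    -- fixed matrices W_i ∈ ℝ^{M×K_i}, i = 0, …, L−1
    (W : (i : ℕ) → Matrix (Fin M) (Fin (K i)) ℝ)
    -- feature vectors v_i^n ∈ ℝ^{K_i} and targets y^n ∈ ℝ^{N_o}
    (v : (i : ℕ) → Fin N → Fin (K i) → ℝ)
    (y : Fin N → Fin No → ℝ)
    -- u^n = Σ_{i=0}^{L−1} W_i v_i^n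
    (u : Fin N → Fin M → ℝ)
    (hu : ∀ n, u n = ∑ i ∈ Finset.range L, (W i).mulVec (v i n))
    -- squared loss ℓ(yhat, y) = ‖yhat − y‖²
    (ℓ : (Fin No → ℝ) → (Fin No → ℝ) → ℝ)
    (hℓ : ∀ yhat yy, ℓ yhat yy = ∑ j, (yhat j - yy j) ^ 2)
    -- fixed-feature ResNEst empirical risk
    (R : Matrix (Fin M) (Fin (K L)) ℝ × Matrix (Fin No) (Fin M) ℝ → ℝ)
    (hR : ∀ p, R p =
      (1 / (N : ℝ)) * ∑ n, ℓ (p.2.mulVec (u n + p.1.mulVec (v L n))) (y n))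
    -- Assumption 1: Σ_n v_L^n (y^n)^T ≠ 0 and Σ_n v_L^n (v_L^n)^T invertible
    (hA1 : (Matrix.of fun k j => ∑ n, v L n k * y n j :
        Matrix (Fin (K L)) (Fin No) ℝ) ≠ 0)
    (hA1' : IsUnit (Matrix.of fun k k' => ∑ n, v L n k * v L n k' :
        Matrix (Fin (K L)) (Fin (K L)) ℝ)) :
    ∀ p : Matrix (Fin M) (Fin (K L)) ℝ × Matrix (Fin No) (Fin M) ℝ,
      fderiv ℝ R p = 0 → ¬ IsLocalMin R p → ¬ IsLocalMax R p := by
  rintro ⟨A, B⟩ - - hmax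
  have hN' : (0 : ℝ) < 1 / (N : ℝ) := by positivity
  have key : ∀ d : Matrix (Fin M) (Fin (K L)) ℝ × Matrix (Fin No) (Fin M) ℝ,
      ∃ t : ℝ, 0 < t ∧ ∀ s : ℝ, (s = t ∨ s = -t) →
      ∑ n, ∑ j, ((B + s • d.2).mulVec (u n + (A + s • d.1).mulVec (v L n)) j - y n j) ^ 2 ≤
      ∑ n, ∑ j, (B.mulVec (u n + A.mulVec (v L n)) j - y n j) ^ 2 := by
    intro d
    obtain ⟨t, ht, h1, h2⟩ := line_localMax R (A, B) d hmax
    refine ⟨t, ht, ?_⟩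
    simp only [hR, hℓ] at h1 h2
    rintro s (rfl | rfl)
    · exact le_of_mul_le_mul_left h1 hN'
    · exact le_of_mul_le_mul_left h2 hN'
  -- a nonzero entry
  obtain ⟨k, j, hkj⟩ : ∃ k j, ∑ n, v L n k * y n j ≠ 0 := by
    by_contra hh
    push Not at hh
    exact hA1 (by ext k j; simpa using hh k j)
  obtain ⟨n0, hn0⟩ : ∃ n, v L n k ≠ 0 := by
    by_contra hh
    push Not at hh
    exact hkj (by simp [hh])
  have hx : ∀ n, u n + A.mulVec (v L n) = 0 := by
    intro n
    ext m
    obtain ⟨t, ht, h⟩ := key (0, Matrix.single j m 1)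
    have := sq_sum_zero (fun n j => B.mulVec (u n + A.mulVec (v L n)) j - y n j)
      (fun n i => (Matrix.single j m (1 : ℝ)).mulVec (u n + A.mulVec (v L n)) i) t ht
      (by
        convert h t (Or.inl rfl) using 6
        simp only [Matrix.add_mulVec, Matrix.smul_mulVec, Matrix.mulVec_add, Matrix.mulVec_smul,
          smul_zero, add_zero, Matrix.zero_mulVec, Pi.add_apply, Pi.smul_apply, smul_eq_mul]
        ring)
      (by
        convert h (-t) (Or.inr rfl) using 6
        simp only [Matrix.add_mulVec, Matrix.smul_mulVec, Matrix.mulVec_add, Matrix.mulVec_smul,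
          smul_zero, add_zero, Matrix.zero_mulVec, Pi.add_apply, Pi.smul_apply, smul_eq_mul]
        ring) n j
    simpa [Matrix.single_mulVec] using this
  have hB : B = 0 := by
    ext i m
    obtain ⟨t, ht, h⟩ := key (Matrix.single m k 1, 0)
    have := sq_sum_zero (fun n j => B.mulVec (u n + A.mulVec (v L n)) j - y n j)
      (fun n i => B.mulVec ((Matrix.single m k (1 : ℝ)).mulVec (v L n)) i) t ht
      (by
        convert h t (Or.inl rfl) using 6
        simp only [Matrix.add_mulVec, Matrix.smul_mulVec, Matrix.mulVec_add, Matrix.mulVec_smul,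
          smul_zero, add_zero, Matrix.zero_mulVec, Pi.add_apply, Pi.smul_apply, smul_eq_mul]
        ring)
      (by
        convert h (-t) (Or.inr rfl) using 6
        simp only [Matrix.add_mulVec, Matrix.smul_mulVec, Matrix.mulVec_add, Matrix.mulVec_smul,
          smul_zero, add_zero, Matrix.zero_mulVec, Pi.add_apply, Pi.smul_apply, smul_eq_mul]
        ring) n0 i
    have h6 : B i m * v L n0 k = 0 := by
      simpa [Matrix.single_mulVec, Matrix.mulVec, dotProduct, Matrix.single_apply,
        Function.update_apply, ite_and] using this
    simpa [hn0] using h6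
  subst hB
  obtain ⟨m0⟩ : Nonempty (Fin M) := ⟨⟨0, hM⟩⟩
  set c := ∑ n, v L n k * y n j with hc
  obtain ⟨t, ht, h⟩ := key (Matrix.single m0 k 1, Matrix.single j m0 (-c))
  have h := h t (Or.inl rfl)
  have h7 : ∀ n i, ((0 : Matrix (Fin No) (Fin M) ℝ) + t • Matrix.single j m0 (-c)).mulVec
      (u n + (A + t • Matrix.single m0 k (1 : ℝ)).mulVec (v L n)) i
      = if i = j then - c * t ^ 2 * v L n k else 0 := by
    intro n i
    rw [zero_add, Matrix.add_mulVec, ← add_assoc, hx n, zero_add, Matrix.smul_mulVec,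
      Matrix.smul_mulVec, Matrix.mulVec_smul, Matrix.single_mulVec, Matrix.single_mulVec]
    by_cases hij : i = j
    · subst hij
      simp; ring
    · simp [hij]
  simp only [h7, Matrix.zero_mulVec, Pi.zero_apply, zero_sub, neg_sq] at h
  have h8 : ∀ n, ∑ i, ((if i = j then - c * t ^ 2 * v L n k else 0) - y n i) ^ 2
      = ∑ i, (y n i) ^ 2 + (c ^ 2 * t ^ 4 * (v L n k) ^ 2 + 2 * c * t ^ 2 * (v L n k * y n j)) := by
    intro n
    have : ∀ i, ((if i = j then - c * t ^ 2 * v L n k else 0) - y n i) ^ 2 = (y n i) ^ 2 +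
        if i = j then (c ^ 2 * t ^ 4 * (v L n k) ^ 2 + 2 * c * t ^ 2 * (v L n k * y n j)) else 0 := by
      intro i
      split_ifs with hij
      · subst hij; ring
      · ring
    simp only [this, Finset.sum_add_distrib]
    simp
  simp only [h8, Finset.sum_add_distrib, ← Finset.mul_sum, ← hc] at h
  have h9 : 0 ≤ c ^ 2 * t ^ 4 * ∑ n, (v L n k) ^ 2 := by positivity
  have h10 : 0 < c ^ 2 * t ^ 2 := by positivity
  nlinarith
end

section
/- Suppose Assumption 2 holds. Let (W_L*, W_{L+1}*) be any local minimizer of the fixed-feature ResNEst empirical risk R, and let (H_0*,…,H_L*) be any local minimizer of the A-ResNEst empirical risk A. Then R(W_L*, W_{L+1}*) ≥ A(H_0*,…,H_L*), i.e., the excess risk ε(W_L*, W_{L+1}*) = R(W_L*, W_{L+1}*) − A(H_0*,…,H_L*) is nonnegative. -/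
/-!
STATEMENT 3: Under Assumption 2, the risk of any local minimizer of the fixed-feature
ResNEst problem is at least the risk of any local minimizer of the A-ResNEst problem:
the excess risk ε = R(W_L*, W_{L+1}*) − A(H_0*, …, H_L*) is nonnegative.
-/

attribute [local instance] Matrix.normedAddCommGroup Matrix.normedSpace

theorem resnest_local_min_risk_ge_aresnest_local_min_risk
    (N L M No : ℕ) (hN : 0 < N) (hL : 1 ≤ L) (hM : 0 < M) (hNo : 0 < No)
    (K : ℕ → ℕ)
    -- fixed matrices W_i ∈ ℝ^{M×K_i}, i = 0, …, L−1
    (W : (i : ℕ) → Matrix (Fin M) (Fin (K i)) ℝ)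
    -- feature vectors v_i^n ∈ ℝ^{K_i} and targets y^n ∈ ℝ^{N_o}
    (v : (i : ℕ) → Fin N → Fin (K i) → ℝ)
    (y : Fin N → Fin No → ℝ)
    -- u^n = Σ_{i=0}^{L−1} W_i v_i^n
    (u : Fin N → Fin M → ℝ)
    (hu : ∀ n, u n = ∑ i ∈ Finset.range L, (W i).mulVec (v i n))
    -- the loss function
    (ℓ : (Fin No → ℝ) → (Fin No → ℝ) → ℝ)
    -- Assumption 2: ℓ(yhat, y) is differentiable and convex in yhat for every y
    (hdiff : ∀ yy, Differentiable ℝ (fun yhat => ℓ yhat yy))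
    (hconv : ∀ yy, ConvexOn ℝ Set.univ (fun yhat => ℓ yhat yy))
    -- fixed-feature ResNEst empirical risk
    (R : Matrix (Fin M) (Fin (K L)) ℝ × Matrix (Fin No) (Fin M) ℝ → ℝ)
    (hR : ∀ p, R p =
      (1 / (N : ℝ)) * ∑ n, ℓ (p.2.mulVec (u n + p.1.mulVec (v L n))) (y n))
    -- A-ResNEst empirical risk
    (A : ((i : Fin (L + 1)) → Matrix (Fin No) (Fin (K i.val)) ℝ) → ℝ)
    (hA : ∀ H, A H =
      (1 / (N : ℝ)) * ∑ n, ℓ (∑ i : Fin (L + 1), (H i).mulVec (v i.val n)) (y n))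
    -- local minimizers
    (p : Matrix (Fin M) (Fin (K L)) ℝ × Matrix (Fin No) (Fin M) ℝ)
    (hp : IsLocalMin R p)
    (H : (i : Fin (L + 1)) → Matrix (Fin No) (Fin (K i.val)) ℝ)
    (hH : IsLocalMin A H) :
    R p - A H ≥ 0 := by
  have hAconv : ConvexOn ℝ Set.univ A := by
    refine ⟨convex_univ, ?_⟩
    intro X _ Y _ a b ha hb hab
    rw [hA, hA, hA, smul_eq_mul, smul_eq_mul, mul_left_comm a, mul_left_comm b, ← mul_add]
    refine mul_le_mul_of_nonneg_left ?_ (by positivity)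
    rw [Finset.mul_sum, Finset.mul_sum, ← Finset.sum_add_distrib]
    refine Finset.sum_le_sum fun n _ => ?_
    have h := (hconv (y n)).2 (Set.mem_univ (∑ i : Fin (L + 1), (X i).mulVec (v i.val n)))
      (Set.mem_univ (∑ i : Fin (L + 1), (Y i).mulVec (v i.val n))) ha hb hab
    have e : ∑ i : Fin (L + 1), ((a • X + b • Y) i).mulVec (v i.val n)
        = a • ∑ i : Fin (L + 1), (X i).mulVec (v i.val n)
          + b • ∑ i : Fin (L + 1), (Y i).mulVec (v i.val n) := by
      rw [Finset.smul_sum, Finset.smul_sum, ← Finset.sum_add_distrib]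
      refine Finset.sum_congr rfl fun i _ => ?_
      rw [Pi.add_apply, Pi.smul_apply, Pi.smul_apply, Matrix.add_mulVec, Matrix.smul_mulVec,
        Matrix.smul_mulVec]
    rw [e]
    exact h
  have hmin := IsMinOn.of_isLocalMin_of_convex_univ hH hAconv
  have key : R p = A (fun i => p.2 * Function.update W L p.1 i.val) := by
    rw [hR, hA]
    congr 1
    refine Finset.sum_congr rfl fun n _ => ?_
    congr 1
    rw [Fin.sum_univ_castSucc, hu, Matrix.mulVec_add, Matrix.mulVec_sum, Finset.sum_range]
    congr 1
    · refine Finset.sum_congr rfl fun i _ => ?_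
      have hne : (i.castSucc).val ≠ L := by
        have := i.isLt
        simp only [Fin.val_castSucc]
        omega
      rw [Function.update_of_ne hne, Matrix.mulVec_mulVec]
      rfl
    · have : Function.update W L p.1 (Fin.last L).val = p.1 := Function.update_self ..
      rw [this, Matrix.mulVec_mulVec]
      rfl
  rw [key]
  exact sub_nonneg.mpr (hmin _)
end

section
/- Suppose Assumption 2 (ℓ differentiable and convex in its first argument), Assumption 3 (M ≥ N_o), and Assumption 4 (the linear map (c_0,…,c_{L−1}) ↦ Σ_{i=0}^{L−1} W_i c_i is injective) hold. Then every critical point (W_L*, W_{L+1}*) of the fixed-feature ResNEst empirical risk R at which W_{L+1}* has full rank N_o is a global minimizer of R. -/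
/-!
STATEMENT 4: Under Assumptions 2 (ℓ differentiable and convex in its first argument),
3 (M ≥ N_o) and 4 (injectivity of (c_0,…,c_{L−1}) ↦ Σ W_i c_i), every critical point
of the fixed-feature ResNEst risk `R` at which `W_{L+1}*` has full rank `N_o`
is a global minimizer of `R`.
-/

attribute [local instance] Matrix.normedAddCommGroup Matrix.normedSpace

theorem resnest_full_rank_critical_point_is_global_min
    (N L M No : ℕ) (hN : 0 < N) (hL : 1 ≤ L) (hM : 0 < M) (hNo : 0 < No)
    (K : ℕ → ℕ)
    -- fixed matrices W_i ∈ ℝ^{M×K_i}, i = 0, …, L−1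
    (W : (i : ℕ) → Matrix (Fin M) (Fin (K i)) ℝ)
    -- feature vectors v_i^n ∈ ℝ^{K_i} and targets y^n ∈ ℝ^{N_o}
    (v : (i : ℕ) → Fin N → Fin (K i) → ℝ)
    (y : Fin N → Fin No → ℝ)
    -- u^n = Σ_{i=0}^{L−1} W_i v_i^n
    (u : Fin N → Fin M → ℝ)
    (hu : ∀ n, u n = ∑ i ∈ Finset.range L, (W i).mulVec (v i n))
    -- the loss function
    (ℓ : (Fin No → ℝ) → (Fin No → ℝ) → ℝ)
    -- Assumption 2: ℓ(yhat, y) is differentiable and convex in yhat for every y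
    (hdiff : ∀ yy, Differentiable ℝ (fun yhat => ℓ yhat yy))
    (hconv : ∀ yy, ConvexOn ℝ Set.univ (fun yhat => ℓ yhat yy))
    -- Assumption 3: M ≥ N_o
    (hMNo : M ≥ No)
    -- Assumption 4: (c_0, …, c_{L−1}) ↦ Σ_{i=0}^{L−1} W_i c_i is injective
    (hinj : Function.Injective
      (fun c : (i : Fin L) → Fin (K i.val) → ℝ => ∑ i : Fin L, (W i.val).mulVec (c i)))
    -- fixed-feature ResNEst empirical risk
    (R : Matrix (Fin M) (Fin (K L)) ℝ × Matrix (Fin No) (Fin M) ℝ → ℝ)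
    (hR : ∀ p, R p =
      (1 / (N : ℝ)) * ∑ n, ℓ (p.2.mulVec (u n + p.1.mulVec (v L n))) (y n))
    -- a critical point with full-rank W_{L+1}
    (p : Matrix (Fin M) (Fin (K L)) ℝ × Matrix (Fin No) (Fin M) ℝ)
    (hcrit : fderiv ℝ R p = 0)
    (hrank : p.2.rank = No) :
    ∀ q, R p ≤ R q := by
  classical
  intro q
  -- predictions at the critical point
  set z : Fin N → Fin No → ℝ := fun n => p.2.mulVec (u n + p.1.mulVec (v L n)) with hz
  set g : Fin N → (Fin No → ℝ) →L[ℝ] ℝ := fun n => fderiv ℝ (fun a => ℓ a (y n)) (z n) with hg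
  have hNR : (N : ℝ) ≠ 0 := by exact_mod_cast hN.ne'
  -- derivative along lines in prediction space
  have hline : ∀ d : Fin N → Fin No → ℝ,
      HasDerivAt (fun t : ℝ => ∑ n, ℓ (z n + t • d n) (y n)) (∑ n, g n (d n)) 0 := by
    intro d
    refine HasDerivAt.fun_sum fun n _ => ?_
    have h1 : HasDerivAt (fun t : ℝ => z n + t • d n) (d n) 0 := by
      simpa using ((hasDerivAt_id (0 : ℝ)).smul_const (d n)).const_add (z n)
    have h2 : HasFDerivAt (fun a => ℓ a (y n)) (g n) (z n + (0 : ℝ) • d n) := by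
      simpa using (hdiff (y n) (z n)).hasFDerivAt
    exact h2.comp_hasDerivAt (0 : ℝ) h1
  -- differentiability of R
  have hRd : DifferentiableAt ℝ R p := by
    have hRe : R = fun p => (1 / (N : ℝ)) *
        ∑ n, ℓ (p.2.mulVec (u n + p.1.mulVec (v L n))) (y n) := funext hR
    rw [hRe]
    refine DifferentiableAt.const_mul (DifferentiableAt.fun_sum fun n _ => ?_) _
    have e1 : ∀ (i : Fin M) (j : Fin (K L)), Differentiable ℝ
        (fun p : Matrix (Fin M) (Fin (K L)) ℝ × Matrix (Fin No) (Fin M) ℝ => p.1 i j) := by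
      intro i j
      exact (differentiable_pi.1 (differentiable_pi.1
        (differentiable_fst (𝕜 := ℝ) (E := Fin M → Fin (K L) → ℝ)
          (F := Fin No → Fin M → ℝ)) i) j)
    have e2 : ∀ (i : Fin No) (j : Fin M), Differentiable ℝ
        (fun p : Matrix (Fin M) (Fin (K L)) ℝ × Matrix (Fin No) (Fin M) ℝ => p.2 i j) := by
      intro i j
      exact (differentiable_pi.1 (differentiable_pi.1
        (differentiable_snd (𝕜 := ℝ) (E := Fin M → Fin (K L) → ℝ)
          (F := Fin No → Fin M → ℝ)) i) j)
    have e3 : Differentiable ℝ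
        (fun p : Matrix (Fin M) (Fin (K L)) ℝ × Matrix (Fin No) (Fin M) ℝ =>
          p.2.mulVec (u n + p.1.mulVec (v L n))) := by
      refine differentiable_pi.2 fun i => ?_
      simp only [Matrix.mulVec, dotProduct, Pi.add_apply]
      refine Differentiable.fun_sum fun j _ => (e2 i j).mul ?_
      refine (differentiable_const _).add ?_
      exact Differentiable.fun_sum fun k _ => (e1 j k).mul_const _
    exact DifferentiableAt.comp (g := fun a => ℓ a (y n)) p (hdiff (y n) _) (e3 p)
  -- a line in parameter space that is a line in prediction space gives a first-order condition
  have key : ∀ (D : Matrix (Fin M) (Fin (K L)) ℝ × Matrix (Fin No) (Fin M) ℝ)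
      (d : Fin N → Fin No → ℝ),
      (∀ (t : ℝ) n, (p + t • D).2.mulVec (u n + (p + t • D).1.mulVec (v L n)) = z n + t • d n) →
      ∑ n, g n (d n) = 0 := by
    intro D d hD
    have h0 : HasFDerivAt R (0 : _ →L[ℝ] ℝ) (p + (0 : ℝ) • D) := by
      have := hRd.hasFDerivAt
      rw [hcrit] at this
      simpa using this
    have h1 : HasDerivAt (fun t : ℝ => p + t • D) D 0 := by
      have := ((hasDerivAt_id (0 : ℝ)).smul_const D).const_add p
      rw [one_smul] at this
      exact this
    have h2 : HasDerivAt (fun t : ℝ => R (p + t • D)) 0 0 := by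
      exact h0.comp_hasDerivAt (0 : ℝ) h1
    have h3 : HasDerivAt (fun t : ℝ => R (p + t • D)) ((1 / (N : ℝ)) * ∑ n, g n (d n)) 0 := by
      have := (hline d).const_mul (1 / (N : ℝ))
      refine this.congr_of_eventuallyEq (Filter.Eventually.of_forall fun t => ?_)
      simp only [hR, hD]
    have h4 := h3.unique h2
    rcases mul_eq_zero.1 h4 with h | h
    · exact absurd h (one_div_ne_zero hNR)
    · exact h
  -- right inverse of W_{L+1}
  obtain ⟨S, hS⟩ : ∃ S : Matrix (Fin M) (Fin No) ℝ, p.2 * S = 1 := by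
    apply Matrix.mulVec_surjective_iff_exists_right_inverse.1
    have : LinearMap.range p.2.mulVecLin = ⊤ := by
      apply Submodule.eq_top_of_finrank_eq
      rw [← Matrix.rank, hrank]
      simp
    exact LinearMap.range_eq_top.1 this
  have hB : ∀ B : Matrix (Fin No) (Fin (K L)) ℝ, ∑ n, g n (B.mulVec (v L n)) = 0 := by
    intro B
    refine key (S * B, 0) _ fun t n => ?_
    simp only [hz, Prod.snd_add, Prod.fst_add, Prod.smul_fst, Prod.smul_snd, smul_zero, add_zero,
      Matrix.add_mulVec, Matrix.smul_mulVec, Matrix.mulVec_add, Matrix.mulVec_smul,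
      Matrix.mulVec_mulVec]
    rw [← Matrix.mul_assoc, hS, Matrix.one_mul, add_assoc]
  have hC0 : ∀ C : Matrix (Fin No) (Fin M) ℝ,
      ∑ n, g n (C.mulVec (u n + p.1.mulVec (v L n))) = 0 := by
    intro C
    refine key (0, C) _ fun t n => ?_
    simp only [hz, Prod.snd_add, Prod.fst_add, Prod.smul_fst, Prod.smul_snd, smul_zero, add_zero,
      Matrix.add_mulVec, Matrix.smul_mulVec]
  have hC : ∀ C : Matrix (Fin No) (Fin M) ℝ, ∑ n, g n (C.mulVec (u n)) = 0 := by
    intro C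
    have h := hC0 C
    simp only [Matrix.mulVec_add, map_add, Finset.sum_add_distrib, Matrix.mulVec_mulVec, hB,
      add_zero] at h
    exact h
  -- first-order condition towards q
  set w : Fin N → Fin No → ℝ := fun n => q.2.mulVec (u n + q.1.mulVec (v L n)) with hw
  have hzero : ∑ n, g n (w n - z n) = 0 := by
    simp only [hw, hz, Matrix.mulVec_add, map_sub, map_add, Finset.sum_add_distrib,
      Finset.sum_sub_distrib, Matrix.mulVec_mulVec, hB, hC, add_zero, sub_zero]
  have hF := hline fun n => w n - z n
  rw [hzero] at hF
  have hcx : ConvexOn ℝ Set.univ (fun t : ℝ => ∑ n, ℓ (z n + t • (w n - z n)) (y n)) := by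
    refine ⟨convex_univ, fun a _ b _ α β hα hβ hαβ => ?_⟩
    simp only [smul_eq_mul, Finset.mul_sum]
    rw [← Finset.sum_add_distrib]
    refine Finset.sum_le_sum fun n _ => ?_
    have h := (hconv (y n)).2 (Set.mem_univ (z n + a • (w n - z n)))
      (Set.mem_univ (z n + b • (w n - z n))) hα hβ hαβ
    have e : z n + (α * a + β * b) • (w n - z n)
        = α • (z n + a • (w n - z n)) + β • (z n + b • (w n - z n)) := by
      have : z n = (α + β) • z n := by rw [hαβ, one_smul]
      nth_rewrite 1 [this]
      module
    rw [e]
    simpa using h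
  have hs := hcx.le_slope_of_hasDerivAt (Set.mem_univ 0) (Set.mem_univ 1) one_pos hF
  simp only [slope_def_field, one_smul, zero_smul, add_zero, sub_zero, div_one,
    add_sub_cancel] at hs
  rw [hR, hR]
  exact mul_le_mul_of_nonneg_left (sub_nonneg.1 hs) (by positivity)
end

section
/- Suppose Assumption 2 (ℓ differentiable and convex in its first argument), Assumption 3 (M ≥ N_o), and Assumption 4 (the linear map (c_0,…,c_{L−1}) ↦ Σ_{i=0}^{L−1} W_i c_i is injective) hold. Then every local minimizer (W_L*, W_{L+1}*) of the fixed-feature ResNEst empirical risk R attains the empirical risk lower bound: R(W_L*, W_{L+1}*) equals the infimum of the A-ResNEst empirical risk A(H_0,…,H_L) over all (H_0,…,H_L) ∈ ℝ^{N_o×K_0} × ⋯ × ℝ^{N_o×K_L}. In particular every local minimizer of R is a global minimizer of R. -/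
/-!
STATEMENT 5: Under Assumptions 2, 3 and 4, every local minimizer of the fixed-feature
ResNEst risk `R` attains the empirical risk lower bound: its risk is the infimum of the
A-ResNEst risk `A` over all prediction weights `(H_0, …, H_L)`; in particular, every
local minimizer of `R` is a global minimizer of `R`.
-/

attribute [local instance] Matrix.normedAddCommGroup Matrix.normedSpace

theorem aux_stat {N No : ℕ} (hN : 0 < N) (f : Fin N → (Fin No → ℝ) → ℝ)
    (hf : ∀ n, Differentiable ℝ (f n)) (z w : Fin N → Fin No → ℝ) (m : ℝ)
    (hm : m = (1 / (N : ℝ)) * ∑ n, f n (z n))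
    (h : ∀ᶠ t in nhds (0 : ℝ), m ≤ (1 / (N : ℝ)) * ∑ n, f n (z n + t • w n)) :
    ∑ n, fderiv ℝ (f n) (z n) (w n) = 0 := by
  have hN' : (1 / (N : ℝ)) ≠ 0 := by positivity
  have hmin : IsLocalMin (fun t : ℝ => (1 / (N : ℝ)) * ∑ n, f n (z n + t • w n)) 0 := by
    filter_upwards [h] with t ht
    simpa [hm] using ht
  have hd : HasDerivAt (fun t : ℝ => (1 / (N : ℝ)) * ∑ n, f n (z n + t • w n))
      ((1 / (N : ℝ)) * ∑ n, fderiv ℝ (f n) (z n) (w n)) 0 := by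
    apply HasDerivAt.const_mul
    apply HasDerivAt.fun_sum
    intro n _
    have h1 : HasDerivAt (fun t : ℝ => z n + t • w n) (w n) 0 := by
      simpa using ((hasDerivAt_id (0 : ℝ)).smul_const (w n)).const_add (z n)
    have h2 : HasFDerivAt (f n) (fderiv ℝ (f n) (z n)) (z n + (0 : ℝ) • w n) := by
      simpa using (hf n (z n)).hasFDerivAt
    exact h2.comp_hasDerivAt (0 : ℝ) h1
  have := hmin.hasDerivAt_eq_zero hd
  exact (mul_eq_zero.1 this).resolve_left hN'

theorem aux_conv {No : ℕ} (f : (Fin No → ℝ) → ℝ) (hf : Differentiable ℝ f)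
    (hc : ConvexOn ℝ Set.univ f) (z w : Fin No → ℝ) :
    f z + fderiv ℝ f z (w - z) ≤ f w := by
  have h1 : HasDerivAt (fun t : ℝ => z + t • (w - z)) (w - z) 0 := by
    simpa using ((hasDerivAt_id (0 : ℝ)).smul_const (w - z)).const_add z
  have h2 : HasFDerivAt f (fderiv ℝ f z) (z + (0 : ℝ) • (w - z)) := by
    simpa using (hf z).hasFDerivAt
  have h3 := h2.comp_hasDerivAt (0 : ℝ) h1
  have hc' : ConvexOn ℝ Set.univ (f ∘ fun t : ℝ => z + t • (w - z)) := by
    have := hc.comp_affineMap (AffineMap.lineMap z w : ℝ →ᵃ[ℝ] (Fin No → ℝ))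
    have he : (f ∘ fun t : ℝ => z + t • (w - z))
        = f ∘ (AffineMap.lineMap z w : ℝ →ᵃ[ℝ] (Fin No → ℝ)) := by
      funext t
      simp [AffineMap.lineMap_apply, add_comm]
    rw [he]
    exact this
  have h4 := hc'.le_slope_of_hasDerivAt (x := 0) (y := 1) (Set.mem_univ _) (Set.mem_univ _)
    one_pos h3
  simp [slope_def_field] at h4
  simp
  linarith

theorem resnest_local_min_attains_aresnest_lower_bound
    (N L M No : ℕ) (hN : 0 < N) (hL : 1 ≤ L) (hM : 0 < M) (hNo : 0 < No)
    (K : ℕ → ℕ)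
    -- fixed matrices W_i ∈ ℝ^{M×K_i}, i = 0, …, L−1
    (W : (i : ℕ) → Matrix (Fin M) (Fin (K i)) ℝ)
    -- feature vectors v_i^n ∈ ℝ^{K_i} and targets y^n ∈ ℝ^{N_o}
    (v : (i : ℕ) → Fin N → Fin (K i) → ℝ)
    (y : Fin N → Fin No → ℝ)
    -- u^n = Σ_{i=0}^{L−1} W_i v_i^n
    (u : Fin N → Fin M → ℝ)
    (hu : ∀ n, u n = ∑ i ∈ Finset.range L, (W i).mulVec (v i n))
    -- the loss function
    (ℓ : (Fin No → ℝ) → (Fin No → ℝ) → ℝ)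
    -- Assumption 2: ℓ(yhat, y) is differentiable and convex in yhat for every y
    (hdiff : ∀ yy, Differentiable ℝ (fun yhat => ℓ yhat yy))
    (hconv : ∀ yy, ConvexOn ℝ Set.univ (fun yhat => ℓ yhat yy))
    -- Assumption 3: M ≥ N_o
    (hMNo : M ≥ No)
    -- Assumption 4: (c_0, …, c_{L−1}) ↦ Σ_{i=0}^{L−1} W_i c_i is injective
    (hinj : Function.Injective
      (fun c : (i : Fin L) → Fin (K i.val) → ℝ => ∑ i : Fin L, (W i.val).mulVec (c i)))
    -- fixed-feature ResNEst empirical risk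
    (R : Matrix (Fin M) (Fin (K L)) ℝ × Matrix (Fin No) (Fin M) ℝ → ℝ)
    (hR : ∀ p, R p =
      (1 / (N : ℝ)) * ∑ n, ℓ (p.2.mulVec (u n + p.1.mulVec (v L n))) (y n))
    -- A-ResNEst empirical risk
    (A : ((i : Fin (L + 1)) → Matrix (Fin No) (Fin (K i.val)) ℝ) → ℝ)
    (hA : ∀ H, A H =
      (1 / (N : ℝ)) * ∑ n, ℓ (∑ i : Fin (L + 1), (H i).mulVec (v i.val n)) (y n))
    -- a local minimizer of R
    (p : Matrix (Fin M) (Fin (K L)) ℝ × Matrix (Fin No) (Fin M) ℝ)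
    (hp : IsLocalMin R p) :
    IsGLB (Set.range A) (R p) ∧ ∀ q, R p ≤ R q := by
  obtain ⟨P, Q⟩ := p
  set f : Fin N → (Fin No → ℝ) → ℝ := fun n x => ℓ x (y n) with hf
  have hfd : ∀ n, Differentiable ℝ (f n) := fun n => hdiff _
  set z : Fin N → Fin No → ℝ := fun n => Q.mulVec (u n + P.mulVec (v L n)) with hz
  have hRp : R (P, Q) = (1 / (N : ℝ)) * ∑ n, f n (z n) := hR _
  -- stationarity in `Q`, at nearby points with the same outputs
  have hQ : ∀ P' : Matrix (Fin M) (Fin (K L)) ℝ,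
      (∀ n, Q.mulVec (u n + P'.mulVec (v L n)) = z n) →
      (∀ᶠ q in nhds (P', Q), R (P, Q) ≤ R q) → ∀ D : Matrix (Fin No) (Fin M) ℝ,
      ∑ n, fderiv ℝ (f n) (z n) (D.mulVec (u n + P'.mulVec (v L n))) = 0 := by
    intro P' hP' hloc D
    apply aux_stat hN f hfd z _ _ hRp
    have hc : Filter.Tendsto (fun t : ℝ => (P', Q + t • D)) (nhds 0) (nhds (P', Q)) := by
      have : Continuous (fun t : ℝ => (P', Q + t • D)) := by fun_prop
      simpa using this.tendsto 0
    filter_upwards [hc.eventually hloc] with t ht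
    rw [hR (P', _)] at ht
    simpa [Matrix.add_mulVec, Matrix.smul_mulVec, hP'] using ht
  have hP : ∀ D : Matrix (Fin M) (Fin (K L)) ℝ,
      ∑ n, fderiv ℝ (f n) (z n) (Q.mulVec (D.mulVec (v L n))) = 0 := by
    intro D
    apply aux_stat hN f hfd z _ _ hRp
    have hc : Filter.Tendsto (fun t : ℝ => (P + t • D, Q)) (nhds 0) (nhds (P, Q)) := by
      have : Continuous (fun t : ℝ => (P + t • D, Q)) := by fun_prop
      simpa using this.tendsto 0
    filter_upwards [hc.eventually hp] with t ht
    rw [hR (P + t • D, _)] at ht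
    simpa [Matrix.add_mulVec, Matrix.smul_mulVec, Matrix.mulVec_add, Matrix.mulVec_smul, hz, hf,
      add_assoc] using ht
  have hQ0 := hQ P (fun n => rfl) hp
  -- the gradient with respect to `H_L` vanishes
  have hGL : ∀ E : Matrix (Fin No) (Fin (K L)) ℝ,
      ∑ n, fderiv ℝ (f n) (z n) (E.mulVec (v L n)) = 0 := by
    by_cases hQi : Function.Injective Q.mulVec
    · have hle : M ≤ No := by
        have := LinearMap.finrank_le_finrank_of_injective (f := Q.mulVecLin) hQi
        simpa using this
      have hs : Function.Surjective Q.mulVec :=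
        (LinearMap.injective_iff_surjective_of_finrank_eq_finrank (f := Q.mulVecLin)
          (by simpa using le_antisymm hle hMNo)).1 hQi
      obtain ⟨B, hB⟩ := Matrix.mulVec_surjective_iff_exists_right_inverse.1 hs
      intro E
      have := hP (B * E)
      simpa [Matrix.mulVec_mulVec, ← Matrix.mul_assoc, hB] using this
    · have : ∃ x : Fin M → ℝ, x ≠ 0 ∧ Q.mulVec x = 0 := by
        by_contra! hcon
        apply hQi
        intro a b hab
        by_contra hne
        exact hcon (a - b) (sub_ne_zero.2 hne) (by simpa [Matrix.mulVec_sub, sub_eq_zero] using hab)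
      obtain ⟨x, hx, hQx⟩ := this
      have hxx : x ⬝ᵥ x ≠ 0 := by simpa using hx
      have key : ∀ (a : Fin (K L) → ℝ) (b : Fin No → ℝ),
          ∑ n, fderiv ℝ (f n) (z n) ((a ⬝ᵥ v L n) • b) = 0 := by
        intro a b
        have hc : Filter.Tendsto (fun t : ℝ => (P + t • Matrix.vecMulVec x a, Q))
            (nhds 0) (nhds (P, Q)) := by
          have : Continuous (fun t : ℝ => (P + t • Matrix.vecMulVec x a, Q)) := by fun_prop
          simpa using this.tendsto 0
        have hev := hc.eventually (Filter.Eventually.eventually_nhds hp)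
        have hev2 : ∀ᶠ t in nhdsWithin (0 : ℝ) {0}ᶜ, t ≠ 0 := self_mem_nhdsWithin
        obtain ⟨t, ht, ht0⟩ := ((hev.filter_mono nhdsWithin_le_nhds).and hev2).exists
        have hv : ∀ n, (P + t • Matrix.vecMulVec x a).mulVec (v L n)
            = P.mulVec (v L n) + (t * (a ⬝ᵥ v L n)) • x := by
          intro n
          rw [Matrix.add_mulVec, Matrix.smul_mulVec, Matrix.vecMulVec_mulVec]
          ext i
          simp
          ring
        set D : Matrix (Fin No) (Fin M) ℝ := Matrix.vecMulVec b ((x ⬝ᵥ x)⁻¹ • x) with hD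
        have hDx : D.mulVec x = b := by
          rw [hD, Matrix.vecMulVec_mulVec]
          ext i
          simp [hxx]
        have h1 := hQ _ (fun n => by
          rw [hv, ← add_assoc, Matrix.mulVec_add, Matrix.mulVec_smul, hQx]; simp [hz]) ht D
        have h0 := hQ0 D
        simp only [hv, ← add_assoc] at h1
        simp only [Matrix.mulVec_add D (_ + _), Matrix.mulVec_smul, hDx, map_add,
          Finset.sum_add_distrib, h0, zero_add, mul_smul] at h1
        simp only [map_smul _ t, ← Finset.smul_sum] at h1
        exact (smul_eq_zero.1 h1).resolve_left ht0
      intro E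
      have hE : ∀ n, E.mulVec (v L n) = ∑ j, (Pi.single j 1 ⬝ᵥ v L n) • E.col j := by
        intro n
        ext i
        simp only [single_dotProduct, Finset.sum_apply, Pi.smul_apply, smul_eq_mul, one_mul]
        simp only [Matrix.mulVec, dotProduct, Matrix.col_apply]
        exact Finset.sum_congr rfl fun j _ => mul_comm _ _
      simp only [hE, map_sum]
      rw [Finset.sum_comm]
      exact Finset.sum_eq_zero fun j _ => key _ _
  -- the gradient with respect to all `H_i` vanishes
  have hG : ∀ H : (i : Fin (L + 1)) → Matrix (Fin No) (Fin (K i.val)) ℝ,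
      ∑ n, fderiv ℝ (f n) (z n) (∑ i : Fin (L + 1), (H i).mulVec (v i.val n)) = 0 := by
    intro H
    let T : ((i : Fin L) → Fin (K i.val) → ℝ) →ₗ[ℝ] (Fin M → ℝ) :=
      ∑ i : Fin L, (W i.val).mulVecLin ∘ₗ LinearMap.proj i
    have hT : ∀ c, T c = ∑ i : Fin L, (W i.val).mulVec (c i) := by
      intro c
      simp [T]
    have hTi : LinearMap.ker T = ⊥ := by
      rw [LinearMap.ker_eq_bot]
      intro a b hab
      apply hinj
      simpa [hT] using hab
    obtain ⟨S, hS⟩ := LinearMap.exists_leftInverse_of_injective T hTi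
    let F : ((i : Fin L) → Fin (K i.val) → ℝ) →ₗ[ℝ] (Fin No → ℝ) :=
      ∑ i : Fin L, (H i.castSucc).mulVecLin ∘ₗ LinearMap.proj i
    let D : Matrix (Fin No) (Fin M) ℝ := LinearMap.toMatrix' (F ∘ₗ S)
    have hDu : ∀ n, D.mulVec (u n) = ∑ i : Fin L, (H i.castSucc).mulVec (v i.val n) := by
      intro n
      have hun : u n = T (fun i => v i.val n) := by
        rw [hT, hu, Finset.sum_range]
      have : S (T (fun i => v i.val n)) = fun i : Fin L => v i.val n := LinearMap.congr_fun hS _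
      rw [LinearMap.toMatrix'_mulVec, LinearMap.comp_apply, hun, this]
      simp [F]
    have h0 := hQ0 D
    have h1 := hGL (D * P)
    have h2 := hGL (H (Fin.last L))
    simp only [Matrix.mulVec_add, map_add, Finset.sum_add_distrib, hDu, Matrix.mulVec_mulVec] at h0
    simp only [Fin.sum_univ_castSucc, map_add, Finset.sum_add_distrib]
    rw [h1, add_zero] at h0
    have h2' : ∑ n, fderiv ℝ (f n) (z n)
        ((H (Fin.last L)).mulVec (v (Fin.last L).val n)) = 0 := h2
    rw [h2', add_zero]
    exact h0
  -- every value of `R` is a value of `A`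
  have hex : ∀ q : Matrix (Fin M) (Fin (K L)) ℝ × Matrix (Fin No) (Fin M) ℝ, ∃ H : (i : Fin (L + 1)) → Matrix (Fin No) (Fin (K i.val)) ℝ,
      ∀ n, ∑ i : Fin (L + 1), (H i).mulVec (v i.val n)
        = q.2.mulVec (u n + q.1.mulVec (v L n)) := by
    rintro ⟨P', Q'⟩
    refine ⟨Fin.lastCases (motive := fun i => Matrix (Fin No) (Fin (K i.val)) ℝ)
      (Q' * P' : Matrix (Fin No) (Fin (K L)) ℝ) (fun i => Q' * W i.val), fun n => ?_⟩
    rw [Fin.sum_univ_castSucc]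
    simp only [Fin.lastCases_last, Fin.lastCases_castSucc]
    rw [Matrix.mulVec_add, hu, Finset.sum_range, Matrix.mulVec_sum, Matrix.mulVec_mulVec]
    simp only [Matrix.mulVec_mulVec]
    rfl
  have hRA : ∀ q, R q ∈ Set.range A := by
    intro q
    obtain ⟨H, hH⟩ := hex q
    refine ⟨H, ?_⟩
    rw [hA, hR]
    simp only [hH]
  have hlow : ∀ H, R (P, Q) ≤ A H := by
    intro H
    obtain ⟨H0, hH0⟩ := hex (P, Q)
    rw [hRp, hA]
    apply mul_le_mul_of_nonneg_left _ (by positivity)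
    have hz0 := hG H0
    simp only [hH0] at hz0
    have hz0' : ∑ n, fderiv ℝ (f n) (z n) (z n) = 0 := hz0
    have : ∑ n, (f n (z n) + fderiv ℝ (f n) (z n)
        (∑ i : Fin (L + 1), (H i).mulVec (v i.val n) - z n)) ≤
        ∑ n, ℓ (∑ i : Fin (L + 1), (H i).mulVec (v i.val n)) (y n) :=
      Finset.sum_le_sum fun n _ => aux_conv (f n) (hfd n) (hconv _) _ _
    simp only [map_sub, Finset.sum_add_distrib, Finset.sum_sub_distrib, hG H, hz0'] at this
    simpa using this
  have hlb : R (P, Q) ∈ lowerBounds (Set.range A) := by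
    rintro _ ⟨H, rfl⟩
    exact hlow H
  exact ⟨IsLeast.isGLB ⟨hRA _, hlb⟩, fun q => hlb (hRA q)⟩
end

section
/- Suppose Assumption 2 holds (ℓ differentiable and convex in its first argument) and M ≥ N_o. Let L_α > L_β ≥ 1 be integers with L_α ≤ L, and suppose the linear map (c_0,…,c_{L_α−1}) ↦ Σ_{j=0}^{L_α−1} W_j c_j is injective and the linear map (c_0,…,c_{L_β−1}) ↦ Σ_{j=0}^{L_β−1} W_j c_j is injective. Then for any local minimizer (Wᵃ, W'ᵃ) of the depth-L_α truncated ResNEst risk R_{L_α} and any local minimizer (Wᵇ, W'ᵇ) of the depth-L_β truncated ResNEst risk R_{L_β}, one has R_{L_α}(Wᵃ, W'ᵃ) ≤ R_{L_β}(Wᵇ, W'ᵇ). -/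
attribute [local instance] Matrix.normedAddCommGroup Matrix.normedSpace


open Matrix Topology in
theorem aux_line {N M No k : ℕ} (u : Fin N → Fin M → ℝ) (v : Fin N → Fin k → ℝ)
    (φ : Fin N → (Fin No → ℝ) → ℝ) (hd : ∀ n, Differentiable ℝ (φ n))
    (R : Matrix (Fin M) (Fin k) ℝ × Matrix (Fin No) (Fin M) ℝ → ℝ)
    (hR : ∀ p, R p = ∑ n, φ n (p.2 *ᵥ (u n + p.1 *ᵥ v n)))
    (A : Matrix (Fin M) (Fin k) ℝ) (B : Matrix (Fin No) (Fin M) ℝ)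
    (hmin : IsLocalMin R (A, B))
    (γ : ℝ → Matrix (Fin M) (Fin k) ℝ × Matrix (Fin No) (Fin M) ℝ) (hγ : Continuous γ)
    (h0 : γ 0 = (A, B)) (d : Fin N → Fin No → ℝ)
    (hline : ∀ t n, (γ t).2 *ᵥ (u n + (γ t).1 *ᵥ v n) = B *ᵥ (u n + A *ᵥ v n) + t • d n) :
    ∑ n, fderiv ℝ (φ n) (B *ᵥ (u n + A *ᵥ v n)) (d n) = 0 := by
  have hder : HasDerivAt (fun t : ℝ => R (γ t))
      (∑ n, fderiv ℝ (φ n) (B *ᵥ (u n + A *ᵥ v n)) (d n)) 0 := by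
    have : (fun t : ℝ => R (γ t)) =
        fun t => ∑ n, φ n (B *ᵥ (u n + A *ᵥ v n) + t • d n) := by
      funext t
      rw [hR]
      exact Finset.sum_congr rfl fun n _ => by rw [hline]
    rw [this]
    apply HasDerivAt.fun_sum
    intro n _
    have h1 : HasDerivAt (fun t : ℝ => B *ᵥ (u n + A *ᵥ v n) + t • d n) (d n) 0 := by
      simpa using ((hasDerivAt_id (0:ℝ)).smul_const (d n)).const_add (B *ᵥ (u n + A *ᵥ v n))
    have h2 : HasFDerivAt (φ n) (fderiv ℝ (φ n) (B *ᵥ (u n + A *ᵥ v n)))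
        (B *ᵥ (u n + A *ᵥ v n) + (0:ℝ) • d n) := by
      simpa using (hd n _).hasFDerivAt
    exact h2.comp_hasDerivAt (0:ℝ) h1
  have hm : IsLocalMin (fun t : ℝ => R (γ t)) 0 := by
    have ht : Filter.Tendsto γ (𝓝 0) (𝓝 (A, B)) := by
      rw [← h0]; exact hγ.continuousAt
    have := ht.eventually hmin
    unfold IsLocalMin IsMinFilter
    filter_upwards [this] with t ht
    rw [h0]; exact ht
  exact hm.hasDerivAt_eq_zero hder

open Matrix Topology in
theorem aux_core {N M No k : ℕ} (hMNo : M ≥ No)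
    (u : Fin N → Fin M → ℝ) (v : Fin N → Fin k → ℝ)
    (φ : Fin N → (Fin No → ℝ) → ℝ) (hd : ∀ n, Differentiable ℝ (φ n))
    (hc : ∀ n, ConvexOn ℝ Set.univ (φ n))
    (R : Matrix (Fin M) (Fin k) ℝ × Matrix (Fin No) (Fin M) ℝ → ℝ)
    (hR : ∀ p, R p = ∑ n, φ n (p.2 *ᵥ (u n + p.1 *ᵥ v n)))
    (A : Matrix (Fin M) (Fin k) ℝ) (B : Matrix (Fin No) (Fin M) ℝ)
    (hmin : IsLocalMin R (A, B)) (B' : Matrix (Fin No) (Fin M) ℝ) :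
    R (A, B) ≤ ∑ n, φ n (B' *ᵥ u n) := by
  have dB : ∀ A' : Matrix (Fin M) (Fin k) ℝ, IsLocalMin R (A', B) → ∀ E : Matrix (Fin No) (Fin M) ℝ,
      ∑ n, fderiv ℝ (φ n) (B *ᵥ (u n + A' *ᵥ v n)) (E *ᵥ (u n + A' *ᵥ v n)) = 0 := by
    intro A' h E
    refine aux_line u v φ hd R hR A' B h (fun t => (A', B + t • E)) (by fun_prop) (by simp) _ ?_
    intro t n
    simp only [add_mulVec, smul_mulVec]
  have dA : ∀ H : Matrix (Fin M) (Fin k) ℝ,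
      ∑ n, fderiv ℝ (φ n) (B *ᵥ (u n + A *ᵥ v n)) (B *ᵥ (H *ᵥ v n)) = 0 := by
    intro H
    refine aux_line u v φ hd R hR A B hmin (fun t => (A + t • H, B)) (by fun_prop) (by simp) _ ?_
    intro t n
    simp only [add_mulVec, smul_mulVec, mulVec_add, mulVec_smul, add_assoc]
  have hS : ∀ F : Matrix (Fin No) (Fin k) ℝ,
      ∑ n, fderiv ℝ (φ n) (B *ᵥ (u n + A *ᵥ v n)) (F *ᵥ v n) = 0 := by
    intro F
    by_cases hinj : Function.Injective B.mulVecLin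
    · have hle := LinearMap.finrank_le_finrank_of_injective hinj
      simp only [Module.finrank_fin_fun] at hle
      have hsurj : Function.Surjective B.mulVecLin :=
        (LinearMap.injective_iff_surjective_of_finrank_eq_finrank
          (by simp only [Module.finrank_fin_fun]; omega)).1 hinj
      obtain ⟨C, hC⟩ := Matrix.mulVec_surjective_iff_exists_right_inverse.1
        (show Function.Surjective B.mulVec from hsurj)
      have := dA (C * F)
      simpa [Matrix.mulVec_mulVec, ← Matrix.mul_assoc, hC] using this
    · rw [injective_iff_map_eq_zero] at hinj
      push Not at hinj
      obtain ⟨w, hw, hw0⟩ := hinj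
      rw [Matrix.mulVecLin_apply] at hw
      have hww : w ⬝ᵥ w ≠ 0 := by
        simpa [dotProduct_self_eq_zero] using hw0
      -- coordinatewise
      have hi : ∀ i : Fin No, ∑ n, fderiv ℝ (φ n) (B *ᵥ (u n + A *ᵥ v n))
          ((F i ⬝ᵥ v n) • Pi.single i (1:ℝ)) = 0 := by
        intro i
        let H : Matrix (Fin M) (Fin k) ℝ := vecMulVec w (F i)
        have hH : ∀ z, H *ᵥ z = (F i ⬝ᵥ z) • w := by
          intro z
          simp [H, vecMulVec_mulVec]
        have hcont : Filter.Tendsto (fun s : ℝ => (A + s • H, B)) (𝓝 0) (𝓝 (A, B)) := by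
          have : Continuous (fun s : ℝ => (A + s • H, B)) := by fun_prop
          simpa using this.tendsto 0
        have hev := hcont.eventually (eventually_eventually_nhds.2 hmin)
        obtain ⟨s, hs, hs0⟩ := ((hev.filter_mono nhdsWithin_le_nhds).and
          (self_mem_nhdsWithin : {0}ᶜ ∈ 𝓝[≠] (0:ℝ))).exists
        have hs0 : s ≠ 0 := hs0
        have hpred : ∀ n, B *ᵥ (u n + (A + s • H) *ᵥ v n) = B *ᵥ (u n + A *ᵥ v n) := by
          intro n
          simp [add_mulVec, smul_mulVec, mulVec_add, mulVec_smul, hH, hw]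
        have hRe : R (A + s • H, B) = R (A, B) := by
          rw [hR, hR]
          exact Finset.sum_congr rfl fun n _ => by simp only [hpred]
        have hmin' : IsLocalMin R (A + s • H, B) := by
          unfold IsLocalMin IsMinFilter
          rw [hRe]; exact hs
        let E : Matrix (Fin No) (Fin M) ℝ := vecMulVec (Pi.single i 1) w
        have e1 := dB _ hmin' E
        have e0 := dB _ hmin E
        simp only [hpred] at e1
        have hE : ∀ n, E *ᵥ (u n + (A + s • H) *ᵥ v n) = E *ᵥ (u n + A *ᵥ v n)
            + (s * (w ⬝ᵥ w)) • ((F i ⬝ᵥ v n) • Pi.single i (1:ℝ)) := by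
          intro n
          have : E *ᵥ w = (w ⬝ᵥ w) • Pi.single i (1:ℝ) := by
            simp [E, vecMulVec_mulVec]
          simp only [add_mulVec, smul_mulVec, mulVec_add, mulVec_smul, hH, this, smul_smul,
            add_assoc]
          congr 3
          ring_nf
        simp only [hE, map_add, Finset.sum_add_distrib, e0, zero_add] at e1
        simp only [map_smul _ (s * (w ⬝ᵥ w)), ← Finset.smul_sum] at e1
        exact (smul_eq_zero.1 e1).resolve_left (mul_ne_zero hs0 hww)
      have hdec : ∀ n, F *ᵥ v n = ∑ i, (F i ⬝ᵥ v n) • Pi.single i (1:ℝ) := by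
        intro n
        exact pi_eq_sum_univ' _
      simp only [hdec, map_sum]
      rw [Finset.sum_comm]
      exact Finset.sum_eq_zero fun i _ => hi i
  have hT : ∀ E : Matrix (Fin No) (Fin M) ℝ,
      ∑ n, fderiv ℝ (φ n) (B *ᵥ (u n + A *ᵥ v n)) (E *ᵥ u n) = 0 := by
    intro E
    have h1 := dB A hmin E
    have h2 := hS (E * A)
    simp only [mulVec_add, map_add, Finset.sum_add_distrib, mulVec_mulVec] at h1 h2 ⊢
    rw [h2, add_zero] at h1
    exact h1
  have hgrad : ∀ n z z0, φ n z0 + fderiv ℝ (φ n) z0 (z - z0) ≤ φ n z := by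
    intro n z z0
    have hl : ConvexOn ℝ Set.univ (fun t : ℝ => φ n (AffineMap.lineMap z0 z t)) :=
      (hc n).comp_affineMap (AffineMap.lineMap z0 z)
    have hder : HasDerivAt (fun t : ℝ => φ n (AffineMap.lineMap z0 z t))
        (fderiv ℝ (φ n) z0 (z - z0)) 0 := by
      have h1 : HasDerivAt (fun t : ℝ => AffineMap.lineMap z0 z t) (z - z0) 0 :=
        AffineMap.hasDerivAt_lineMap
      have h2 : HasFDerivAt (φ n) (fderiv ℝ (φ n) z0) (AffineMap.lineMap z0 z (0:ℝ)) := by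
        simpa using (hd n z0).hasFDerivAt
      exact h2.comp_hasDerivAt (0:ℝ) h1
    have := hl.le_slope_of_hasDerivAt (Set.mem_univ 0) (Set.mem_univ 1) one_pos hder
    simp [slope_def_field] at this
    rw [map_sub]; linarith
  rw [hR]
  have key : ∑ n, fderiv ℝ (φ n) (B *ᵥ (u n + A *ᵥ v n))
      (B' *ᵥ u n - B *ᵥ (u n + A *ᵥ v n)) = 0 := by
    simp only [map_sub, Finset.sum_sub_distrib, hT B', dB A hmin B, sub_zero]
  calc ∑ n, φ n (B *ᵥ (u n + A *ᵥ v n))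
      = ∑ n, (φ n (B *ᵥ (u n + A *ᵥ v n)) + fderiv ℝ (φ n) (B *ᵥ (u n + A *ᵥ v n))
      (B' *ᵥ u n - B *ᵥ (u n + A *ᵥ v n))) := by rw [Finset.sum_add_distrib, key, add_zero]
    _ ≤ _ := Finset.sum_le_sum fun n _ => hgrad n _ _

theorem resnest_deeper_local_min_le_shallower_local_min
    (N L M No : ℕ) (hN : 0 < N) (hM : 0 < M) (hNo : 0 < No)
    -- feature dimensions, K_0 = N_in is the input dimension
    (K : ℕ → ℕ)
    -- inputs x^n ∈ ℝ^{N_in} and targets y^n ∈ ℝ^{N_o}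
    (x : Fin N → Fin (K 0) → ℝ)
    (y : Fin N → Fin No → ℝ)
    -- fixed matrices W_j ∈ ℝ^{M×K_j}, j = 0, …, L−1
    (W : (j : ℕ) → Matrix (Fin M) (Fin (K j)) ℝ)
    -- residual functions G_i : ℝ^M → ℝ^{K_i}
    (G : (i : ℕ) → (Fin M → ℝ) → Fin (K i) → ℝ)
    -- features: v_0^n = x^n, v_i^n = G_i(Σ_{j<i} W_j v_j^n)
    (v : (i : ℕ) → Fin N → Fin (K i) → ℝ)
    (hv0 : ∀ n, v 0 n = x n)
    (hv : ∀ i n, 1 ≤ i → i ≤ L →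
      v i n = G i (∑ j ∈ Finset.range i, (W j).mulVec (v j n)))
    -- the loss function
    (ℓ : (Fin No → ℝ) → (Fin No → ℝ) → ℝ)
    -- Assumption 2: ℓ(yhat, y) is differentiable and convex in yhat for every y
    (hdiff : ∀ yy, Differentiable ℝ (fun yhat => ℓ yhat yy))
    (hconv : ∀ yy, ConvexOn ℝ Set.univ (fun yhat => ℓ yhat yy))
    -- Assumption 3: M ≥ N_o
    (hMNo : M ≥ No)
    -- depth-L' truncated ResNEst risks
    (Rt : (L' : ℕ) → Matrix (Fin M) (Fin (K L')) ℝ × Matrix (Fin No) (Fin M) ℝ → ℝ)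
    (hRt : ∀ L', 1 ≤ L' → L' ≤ L → ∀ p, Rt L' p =
      (1 / (N : ℝ)) * ∑ n, ℓ
        (p.2.mulVec ((∑ j ∈ Finset.range L', (W j).mulVec (v j n))
          + p.1.mulVec (v L' n))) (y n))
    -- depths L_β < L_α
    (Lα Lβ : ℕ) (hβ : 1 ≤ Lβ) (hβα : Lβ < Lα) (hα : Lα ≤ L)
    -- Assumption 4 for both truncations
    (hinjα : Function.Injective
      (fun c : (j : Fin Lα) → Fin (K j.val) → ℝ => ∑ j : Fin Lα, (W j.val).mulVec (c j)))
    (hinjβ : Function.Injective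
      (fun c : (j : Fin Lβ) → Fin (K j.val) → ℝ => ∑ j : Fin Lβ, (W j.val).mulVec (c j)))
    -- local minimizers of the two truncated risks
    (pa : Matrix (Fin M) (Fin (K Lα)) ℝ × Matrix (Fin No) (Fin M) ℝ)
    (hpa : IsLocalMin (Rt Lα) pa)
    (pb : Matrix (Fin M) (Fin (K Lβ)) ℝ × Matrix (Fin No) (Fin M) ℝ)
    (hpb : IsLocalMin (Rt Lβ) pb) :
    Rt Lα pa ≤ Rt Lβ pb := by
  have hNR : (0:ℝ) < N := by exact_mod_cast hN
  -- linear maps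
  let Wl : ((j : Fin Lα) → Fin (K j.val) → ℝ) →ₗ[ℝ] (Fin M → ℝ) :=
    ∑ j : Fin Lα, (W j.val).mulVecLin ∘ₗ LinearMap.proj j
  have hWl : ∀ c, Wl c = ∑ j : Fin Lα, (W j.val).mulVec (c j) := by
    intro c
    simp [Wl, LinearMap.sum_apply]
  have hker : LinearMap.ker Wl = ⊥ := by
    rw [LinearMap.ker_eq_bot]
    intro c d h
    rw [hWl, hWl] at h
    exact hinjα h
  obtain ⟨P, hP⟩ := LinearMap.exists_leftInverse_of_injective Wl hker
  let Q : ((j : Fin Lα) → Fin (K j.val) → ℝ) →ₗ[ℝ] (Fin No → ℝ) :=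
    pb.2.mulVecLin ∘ₗ ((∑ j : Fin Lβ, (W j.val).mulVecLin ∘ₗ
      LinearMap.proj (R := ℝ) (φ := fun j : Fin Lα => Fin (K j.val) → ℝ) (Fin.castLE hβα.le j))
      + pb.1.mulVecLin ∘ₗ
      LinearMap.proj (R := ℝ) (φ := fun j : Fin Lα => Fin (K j.val) → ℝ) ⟨Lβ, hβα⟩)
  let u : Fin N → Fin M → ℝ := fun n => ∑ j ∈ Finset.range Lα, (W j).mulVec (v j n)
  have hu : ∀ n, (LinearMap.toMatrix' (Q ∘ₗ P)).mulVec (u n) =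
      pb.2.mulVec ((∑ j ∈ Finset.range Lβ, (W j).mulVec (v j n)) + pb.1.mulVec (v Lβ n)) := by
    intro n
    have h1 : u n = Wl (fun j => v j.val n) := by
      rw [hWl]
      exact Finset.sum_range (fun j => (W j).mulVec (v j n))
    have h2 : P (Wl (fun j => v j.val n)) = fun j : Fin Lα => v j.val n :=
      LinearMap.congr_fun hP _
    rw [LinearMap.toMatrix'_mulVec, LinearMap.comp_apply, h1, h2,
      Finset.sum_range (fun j => (W j).mulVec (v j n))]
    simp [Q, LinearMap.sum_apply]
  have hmin : IsLocalMin (fun p : Matrix (Fin M) (Fin (K Lα)) ℝ × Matrix (Fin No) (Fin M) ℝ =>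
      ∑ n, ℓ (p.2.mulVec (u n + p.1.mulVec (v Lα n))) (y n)) (pa.1, pa.2) := by
    unfold IsLocalMin IsMinFilter at hpa ⊢
    filter_upwards [hpa] with p hp
    rw [hRt Lα (by omega) hα, hRt Lα (by omega) hα] at hp
    exact le_of_mul_le_mul_left hp (by positivity)
  have := aux_core hMNo u (v Lα) (fun n z => ℓ z (y n)) (fun n => hdiff _) (fun n => hconv _)
    _ (fun p => rfl) pa.1 pa.2 hmin (LinearMap.toMatrix' (Q ∘ₗ P))
  simp only [hu] at this
  rw [hRt Lα (by omega) hα, hRt Lβ hβ (by omega)]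
  exact mul_le_mul_of_nonneg_left this (by positivity)
end

section
/- Suppose v_0^n = x^n ∈ ℝ^{N_in} (so K_0 = N_in), and suppose Assumption 2 (ℓ differentiable and convex in its first argument), Assumption 3 (M ≥ N_o), and Assumption 4 (the linear map (c_0,…,c_{L−1}) ↦ Σ_{i=0}^{L−1} W_i c_i is injective) hold. Then every local minimizer (W_L*, W_{L+1}*) of the fixed-feature ResNEst empirical risk R satisfies, for every matrix A ∈ ℝ^{N_o×N_in}, R(W_L*, W_{L+1}*) ≤ (1/N) Σ_{n=1}^N ℓ(A x^n, y^n); that is, the trained ResNEst is at least as good as the best linear predictor of the input. -/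
/-!
STATEMENT 7 (Corollary 2(a)): Under Assumptions 2, 3 and 4, every local minimizer of
the fixed-feature ResNEst risk `R` is at least as good as the best linear predictor
of the input: R(W_L*, W_{L+1}*) ≤ (1/N) Σ_n ℓ(A x^n, y^n) for every A ∈ ℝ^{N_o×N_in}.
-/

attribute [local instance] Matrix.normedAddCommGroup Matrix.normedSpace

lemma resnest_stationary {N No : ℕ} (ℓ : (Fin No → ℝ) → (Fin No → ℝ) → ℝ)
    (hdiff : ∀ yy, Differentiable ℝ (fun yhat => ℓ yhat yy))
    (y z d : Fin N → Fin No → ℝ)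
    (h : ∀ᶠ t in nhds (0 : ℝ), ∑ n, ℓ (z n) (y n) ≤ ∑ n, ℓ (z n + t • d n) (y n)) :
    ∑ n, fderiv ℝ (fun yhat => ℓ yhat (y n)) (z n) (d n) = 0 := by
  have hd : HasDerivAt (fun t : ℝ => ∑ n, ℓ (z n + t • d n) (y n))
      (∑ n, fderiv ℝ (fun yhat => ℓ yhat (y n)) (z n) (d n)) 0 := by
    apply HasDerivAt.fun_sum
    intro n _
    have h1 : HasDerivAt (fun t : ℝ => z n + t • d n) (d n) 0 := by
      simpa using ((hasDerivAt_id (0 : ℝ)).smul_const (d n)).const_add (z n)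
    have h2 : HasFDerivAt (fun yhat => ℓ yhat (y n))
        (fderiv ℝ (fun yhat => ℓ yhat (y n)) (z n)) (z n + (0 : ℝ) • d n) := by
      simpa using (hdiff (y n) (z n)).hasFDerivAt
    exact h2.comp_hasDerivAt (0 : ℝ) h1
  refine IsLocalMin.hasDerivAt_eq_zero ?_ hd
  filter_upwards [h] with t ht
  simpa using ht

lemma resnest_convex_ineq {No : ℕ} (f : (Fin No → ℝ) → ℝ)
    (hdiff : Differentiable ℝ f) (hconv : ConvexOn ℝ Set.univ f) (z w : Fin No → ℝ) :
    f z + (fderiv ℝ f z w - fderiv ℝ f z z) ≤ f w := by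
  have hd : HasDerivAt (fun t : ℝ => f (AffineMap.lineMap z w t)) (fderiv ℝ f z (w - z)) 0 := by
    have h1 : HasDerivAt (fun t : ℝ => (AffineMap.lineMap z w t : Fin No → ℝ)) (w - z) 0 :=
      AffineMap.hasDerivAt_lineMap
    have h2 : HasFDerivAt f (fderiv ℝ f z) (AffineMap.lineMap z w (0 : ℝ)) := by
      simpa using (hdiff z).hasFDerivAt
    exact h2.comp_hasDerivAt (0 : ℝ) h1
  have hc : ConvexOn ℝ Set.univ (fun t : ℝ => f (AffineMap.lineMap z w t)) := by
    exact hconv.comp_affineMap (AffineMap.lineMap z w : ℝ →ᵃ[ℝ] (Fin No → ℝ))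
  have := hc.le_slope_of_hasDerivAt (Set.mem_univ 0) (Set.mem_univ 1) one_pos hd
  simp [slope_def_field] at this
  linarith

theorem resnest_local_min_beats_linear_predictor
    (N L M No : ℕ) (hN : 0 < N) (hL : 1 ≤ L) (hM : 0 < M) (hNo : 0 < No)
    -- feature dimensions, K_0 = N_in is the input dimension
    (K : ℕ → ℕ)
    -- inputs x^n ∈ ℝ^{N_in} and targets y^n ∈ ℝ^{N_o}
    (x : Fin N → Fin (K 0) → ℝ)
    (y : Fin N → Fin No → ℝ)
    -- fixed matrices W_i ∈ ℝ^{M×K_i}, i = 0, …, L−1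
    (W : (i : ℕ) → Matrix (Fin M) (Fin (K i)) ℝ)
    -- feature vectors v_i^n ∈ ℝ^{K_i}, with v_0^n = x^n
    (v : (i : ℕ) → Fin N → Fin (K i) → ℝ)
    (hv0 : ∀ n, v 0 n = x n)
    -- u^n = Σ_{i=0}^{L−1} W_i v_i^n
    (u : Fin N → Fin M → ℝ)
    (hu : ∀ n, u n = ∑ i ∈ Finset.range L, (W i).mulVec (v i n))
    -- the loss function
    (ℓ : (Fin No → ℝ) → (Fin No → ℝ) → ℝ)
    -- Assumption 2: ℓ(yhat, y) is differentiable and convex in yhat for every y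
    (hdiff : ∀ yy, Differentiable ℝ (fun yhat => ℓ yhat yy))
    (hconv : ∀ yy, ConvexOn ℝ Set.univ (fun yhat => ℓ yhat yy))
    -- Assumption 3: M ≥ N_o
    (hMNo : M ≥ No)
    -- Assumption 4: (c_0, …, c_{L−1}) ↦ Σ_{i=0}^{L−1} W_i c_i is injective
    (hinj : Function.Injective
      (fun c : (i : Fin L) → Fin (K i.val) → ℝ => ∑ i : Fin L, (W i.val).mulVec (c i)))
    -- fixed-feature ResNEst empirical risk
    (R : Matrix (Fin M) (Fin (K L)) ℝ × Matrix (Fin No) (Fin M) ℝ → ℝ)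
    (hR : ∀ p, R p =
      (1 / (N : ℝ)) * ∑ n, ℓ (p.2.mulVec (u n + p.1.mulVec (v L n))) (y n))
    -- a local minimizer of R
    (p : Matrix (Fin M) (Fin (K L)) ℝ × Matrix (Fin No) (Fin M) ℝ)
    (hp : IsLocalMin R p) :
    ∀ A : Matrix (Fin No) (Fin (K 0)) ℝ,
      R p ≤ (1 / (N : ℝ)) * ∑ n, ℓ (A.mulVec (x n)) (y n) := by
  intro A
  have hNpos : (0 : ℝ) < 1 / (N : ℝ) := by positivity
  obtain ⟨P, Q⟩ := p
  set z : Fin N → Fin No → ℝ := fun n => Q.mulVec (u n + P.mulVec (v L n)) with hz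
  -- local minimality at nearby points with the same predictions
  have key : ∀ᶠ p' in nhds (P, Q), (∀ n, p'.2.mulVec (u n + p'.1.mulVec (v L n)) = z n) →
      ∀ E : Matrix (Fin M) (Fin (K L)) ℝ × Matrix (Fin No) (Fin M) ℝ,
      ∀ᶠ t in nhds (0 : ℝ), ∑ n, ℓ (z n) (y n) ≤
        ∑ n, ℓ ((p'.2 + t • E.2).mulVec (u n + (p'.1 + t • E.1).mulVec (v L n))) (y n) := by
    have hp' : ∀ᶠ q in nhds (P, Q), R (P, Q) ≤ R q := hp
    filter_upwards [eventually_eventually_nhds.2 hp'] with p' h1 _ E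
    have hcont : Filter.Tendsto (fun t : ℝ => p' + t • E) (nhds 0) (nhds p') := by
      have : Continuous (fun t : ℝ => p' + t • E) := by fun_prop
      simpa using this.tendsto 0
    filter_upwards [hcont.eventually h1] with t ht
    rw [hR, hR] at ht
    exact le_of_mul_le_mul_left ht hNpos
  set D : Fin N → (Fin No → ℝ) →L[ℝ] ℝ :=
    fun n => fderiv ℝ (fun yhat => ℓ yhat (y n)) (z n) with hD
  have keyB : ∀ᶠ p' in nhds (P, Q), (∀ n, p'.2.mulVec (u n + p'.1.mulVec (v L n)) = z n) →
      ∀ B : Matrix (Fin No) (Fin M) ℝ,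
      ∑ n, D n (B.mulVec (u n + p'.1.mulVec (v L n))) = 0 := by
    filter_upwards [key] with p' h hp' B
    apply resnest_stationary ℓ hdiff y z
    filter_upwards [h hp' (0, B)] with t ht
    simpa [Matrix.add_mulVec, Matrix.smul_mulVec, hp'] using ht
  have h1 : ∀ B : Matrix (Fin No) (Fin M) ℝ,
      ∑ n, D n (B.mulVec (u n + P.mulVec (v L n))) = 0 := keyB.self_of_nhds (fun n => rfl)
  have h2 : ∀ E : Matrix (Fin M) (Fin (K L)) ℝ,
      ∑ n, D n (Q.mulVec (E.mulVec (v L n))) = 0 := by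
    intro E
    apply resnest_stationary ℓ hdiff y z
    filter_upwards [key.self_of_nhds (fun n => rfl) (E, 0)] with t ht
    have e : ∀ n, (Q + t • (0 : Matrix (Fin No) (Fin M) ℝ)).mulVec
        (u n + (P + t • E).mulVec (v L n)) = z n + t • Q.mulVec (E.mulVec (v L n)) := by
      intro n
      simp only [hz, smul_zero, add_zero, Matrix.add_mulVec, Matrix.smul_mulVec,
        Matrix.mulVec_add, Matrix.mulVec_smul, add_assoc]
    simpa only [e] using ht
  have h3 : ∀ B : Matrix (Fin No) (Fin (K L)) ℝ, ∑ n, D n (B.mulVec (v L n)) = 0 := by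
    intro B
    by_cases hs : Function.Surjective Q.mulVec
    · choose g hg using hs
      have hB : Q * (Matrix.of fun i j => g (fun k => B k j) i) = B := by
        ext i j
        exact congrFun (hg (fun k => B k j)) i
      have := h2 (Matrix.of fun i j => g (fun k => B k j) i)
      simpa only [Matrix.mulVec_mulVec, hB] using this
    · have hni : ¬ Function.Injective Q.mulVecLin := by
        intro hi
        apply hs
        have hle := LinearMap.finrank_le_finrank_of_injective hi
        simp at hle
        have hfr : Module.finrank ℝ (Fin M → ℝ) = Module.finrank ℝ (Fin No → ℝ) := by
          simp; omega
        exact (LinearMap.injective_iff_surjective_of_finrank_eq_finrank hfr).1 hi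
      rw [← LinearMap.ker_eq_bot, Submodule.eq_bot_iff] at hni
      push Not at hni
      obtain ⟨b, hb, hb0⟩ := hni
      replace hb : Q.mulVec b = 0 := hb
      obtain ⟨k, hk⟩ := Function.ne_iff.1 hb0
      replace hk : b k ≠ 0 := hk
      -- rank one directions
      have hr : ∀ (c : Fin (K L) → ℝ) (a : Fin No → ℝ),
          ∑ n, D n ((c ⬝ᵥ v L n) • a) = 0 := by
        intro c a
        have hcont : Filter.Tendsto
            (fun t : ℝ => ((P + t • Matrix.vecMulVec b c, Q) :
              Matrix (Fin M) (Fin (K L)) ℝ × Matrix (Fin No) (Fin M) ℝ))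
            (nhds 0) (nhds (P, Q)) := by
          have : Continuous (fun t : ℝ => ((P + t • Matrix.vecMulVec b c, Q) :
              Matrix (Fin M) (Fin (K L)) ℝ × Matrix (Fin No) (Fin M) ℝ)) := by fun_prop
          simpa using this.tendsto 0
        have hev := (hcont.eventually keyB).filter_mono
          (nhdsWithin_le_nhds : nhdsWithin (0 : ℝ) {0}ᶜ ≤ nhds 0)
        obtain ⟨t, ht, ht0⟩ := (hev.and self_mem_nhdsWithin).exists
        replace ht0 : t ≠ 0 := ht0
        have hv : ∀ n, (P + t • Matrix.vecMulVec b c).mulVec (v L n)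
            = P.mulVec (v L n) + (t * (c ⬝ᵥ v L n)) • b := by
          intro n
          rw [Matrix.add_mulVec, Matrix.smul_mulVec, Matrix.vecMulVec_mulVec, mul_smul]
          simp
        have hB := ht (fun n => by
          simp only [hv, hz, Matrix.mulVec_add, Matrix.mulVec_smul, hb, smul_zero, add_zero])
          (Matrix.vecMulVec a (Pi.single k 1))
        have hA := h1 (Matrix.vecMulVec a (Pi.single k 1))
        have hab : (Matrix.vecMulVec a (Pi.single k 1)).mulVec b = b k • a := by
          rw [Matrix.vecMulVec_mulVec]; simp
        simp only [hv, ← add_assoc] at hB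
        simp only [Matrix.mulVec_add _ (_ + _) (_ • b), Matrix.mulVec_smul, hab, map_add,
          Finset.sum_add_distrib (f := fun n => D n _)] at hB hA
        simp only [map_smul, smul_eq_mul, map_add, Finset.sum_add_distrib,
          Matrix.mulVec_add] at hB hA ⊢
        rw [hA, zero_add] at hB
        have : t * b k * ∑ n, (c ⬝ᵥ v L n) * D n a = 0 := by
          rw [← hB, Finset.mul_sum]
          exact Finset.sum_congr rfl fun n _ => by ring
        simpa [ht0, hk] using this
      have hB : ∀ n, B.mulVec (v L n) = ∑ i, (B i ⬝ᵥ v L n) • (Pi.single i 1 : Fin No → ℝ) := by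
        intro n
        ext j
        simp [Matrix.mulVec, Finset.sum_apply, Pi.single_apply]
      simp only [hB, map_sum]
      rw [Finset.sum_comm]
      exact Finset.sum_eq_zero fun i _ => hr _ _
  have h4 : ∀ B : Matrix (Fin No) (Fin M) ℝ, ∑ n, D n (B.mulVec (u n)) = 0 := by
    intro B
    have e1 := h1 B
    have e2 := h3 (B * P)
    simp only [Matrix.mulVec_add, map_add, Finset.sum_add_distrib, Matrix.mulVec_mulVec] at e1
    linarith
  have h5 : ∑ n, D n (A.mulVec (x n)) = 0 := by
    let f : ((i : Fin L) → Fin (K i.val) → ℝ) →ₗ[ℝ] (Fin M → ℝ) :=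
      ∑ i : Fin L, (W i.val).mulVecLin ∘ₗ LinearMap.proj i
    have hf : ∀ c, f c = ∑ i : Fin L, (W i.val).mulVec (c i) := by
      intro c
      simp [f, LinearMap.sum_apply]
    have hfi : LinearMap.ker f = ⊥ := by
      rw [LinearMap.ker_eq_bot]
      intro c c' h
      rw [hf, hf] at h
      exact hinj h
    obtain ⟨g, hg⟩ := f.exists_leftInverse_of_injective hfi
    let T : (Fin M → ℝ) →ₗ[ℝ] (Fin No → ℝ) :=
      A.mulVecLin ∘ₗ (LinearMap.proj (⟨0, hL⟩ : Fin L)) ∘ₗ g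
    have := h4 (LinearMap.toMatrix' T)
    have hT : ∀ n, (LinearMap.toMatrix' T).mulVec (u n) = A.mulVec (x n) := by
      intro n
      have hun : u n = f (fun i : Fin L => v i.val n) := by
        rw [hf, hu, Finset.sum_range]
      have hgf : g (u n) = fun i : Fin L => v i.val n := by
        rw [hun]; exact LinearMap.congr_fun hg _
      rw [LinearMap.toMatrix'_mulVec]
      change A.mulVec (g (u n) ⟨0, hL⟩) = _
      rw [hgf, ← hv0]
    simpa only [hT] using this
  rw [hR]
  refine mul_le_mul_of_nonneg_left ?_ hNpos.le
  have hs := Finset.sum_le_sum (s := Finset.univ) fun n _ =>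
    resnest_convex_ineq (fun yhat => ℓ yhat (y n)) (hdiff (y n)) (hconv (y n)) (z n) (A.mulVec (x n))
  rw [Finset.sum_add_distrib, Finset.sum_sub_distrib] at hs
  have e1 : ∑ n, fderiv ℝ (fun yhat => ℓ yhat (y n)) (z n) (A.mulVec (x n)) = 0 := h5
  have e2 : ∑ n, fderiv ℝ (fun yhat => ℓ yhat (y n)) (z n) (z n) = 0 := h1 Q
  rw [e1, e2] at hs
  simpa using hs
end

section
/- Suppose v_0^n = x^n ∈ ℝ^{N_in} (so K_0 = N_in), and suppose Assumption 2 (ℓ differentiable and convex in its first argument), Assumption 3 (M ≥ N_o), and Assumption 4 (the linear map (c_0,…,c_{L−1}) ↦ Σ_{i=0}^{L−1} W_i c_i is injective) hold. If moreover the infimum of the A-ResNEst risk A(H_0,…,H_L) over all (H_0,…,H_L) is strictly smaller than the infimum of A(H_0, 0,…,0) over all H_0 ∈ ℝ^{N_o×N_in}, then every local minimizer (W_L*, W_{L+1}*) of the fixed-feature ResNEst empirical risk R satisfies the strict inequality R(W_L*, W_{L+1}*) < (1/N) Σ_{n=1}^N ℓ(A x^n, y^n) for every matrix A ∈ ℝ^{N_o×N_in}.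 -/
/-!
STATEMENT 8 (Corollary 2(b)): Under Assumptions 2, 3 and 4, if the infimum of the
A-ResNEst risk over all (H_0, …, H_L) is strictly smaller than the infimum over
linear-only predictors (H_0, 0, …, 0), then every local minimizer of the
fixed-feature ResNEst risk `R` is strictly better than every linear predictor.
-/

attribute [local instance] Matrix.normedAddCommGroup Matrix.normedSpace

lemma resnest_aux_convex {m : ℕ} (f : (Fin m → ℝ) → ℝ) (hd : Differentiable ℝ f)
    (hc : ConvexOn ℝ Set.univ f) (a z : Fin m → ℝ) :
    f a + fderiv ℝ f a (z - a) ≤ f z := by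
  have hline : HasDerivAt (fun t : ℝ => a + t • (z - a)) (z - a) 0 := by
    simpa using ((hasDerivAt_id (0:ℝ)).smul_const (z - a)).const_add a
  have h1 : HasDerivAt (fun t : ℝ => f (a + t • (z - a))) (fderiv ℝ f a (z - a)) 0 := by
    have h2 : HasFDerivAt f (fderiv ℝ f a) (a + (0:ℝ) • (z - a)) := by
      simpa using (hd a).hasFDerivAt
    exact h2.comp_hasDerivAt (0:ℝ) hline
  have hcg : ConvexOn ℝ Set.univ (fun t : ℝ => f (a + t • (z - a))) := by
    refine ⟨convex_univ, fun s _ t _ p q hp hq hpq => ?_⟩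
    have := hc.2 (Set.mem_univ (a + s • (z - a))) (Set.mem_univ (a + t • (z - a))) hp hq hpq
    refine le_trans (le_of_eq ?_) this
    have hq' : q = 1 - p := by linarith
    subst hq'
    show f _ = f _
    congr 1
    ext i
    simp
    ring
  have := hcg.le_slope_of_hasDerivAt (Set.mem_univ 0) (Set.mem_univ 1) one_pos h1
  simp [slope_def_field] at this
  rw [map_sub]
  linarith

lemma resnest_aux_crit {N M No KL : ℕ} (hN : 0 < N) (y : Fin N → Fin No → ℝ)
    (vL : Fin N → Fin KL → ℝ) (u : Fin N → Fin M → ℝ)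
    (ℓ : (Fin No → ℝ) → (Fin No → ℝ) → ℝ)
    (hdiff : ∀ yy, Differentiable ℝ (fun yhat => ℓ yhat yy))
    (R : Matrix (Fin M) (Fin KL) ℝ × Matrix (Fin No) (Fin M) ℝ → ℝ)
    (hR : ∀ p, R p =
      (1 / (N : ℝ)) * ∑ n, ℓ (p.2.mulVec (u n + p.1.mulVec (vL n))) (y n))
    (C : Matrix (Fin M) (Fin KL) ℝ) (B : Matrix (Fin No) (Fin M) ℝ)
    (hp : IsLocalMin R (C, B)) (F : Matrix (Fin M) (Fin KL) ℝ)
    (E : Matrix (Fin No) (Fin M) ℝ) :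
    ∑ n, fderiv ℝ (fun z => ℓ z (y n)) (B.mulVec (u n + C.mulVec (vL n)))
      (E.mulVec (u n + C.mulVec (vL n)) + B.mulVec (F.mulVec (vL n))) = 0 := by
  have hcont : ContinuousAt (fun t : ℝ => ((C + t • F, B + t • E) :
      Matrix (Fin M) (Fin KL) ℝ × Matrix (Fin No) (Fin M) ℝ)) 0 := by
    fun_prop
  have hmin : IsLocalMin (fun t : ℝ => R (C + t • F, B + t • E)) 0 := by
    have h0 : IsLocalMin R (C + (0:ℝ) • F, B + (0:ℝ) • E) := by simpa using hp
    exact IsMinFilter.comp_tendsto h0 hcont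
  have hn : ∀ n, HasDerivAt (fun t : ℝ => ℓ ((B + t • E).mulVec (u n + (C + t • F).mulVec (vL n))) (y n))
      (fderiv ℝ (fun z => ℓ z (y n)) (B.mulVec (u n + C.mulVec (vL n)))
      (E.mulVec (u n + C.mulVec (vL n)) + B.mulVec (F.mulVec (vL n)))) 0 := by
    intro n
    have e : ∀ t : ℝ, (B + t • E).mulVec (u n + (C + t • F).mulVec (vL n)) =
        B.mulVec (u n + C.mulVec (vL n)) +
        (t • (E.mulVec (u n + C.mulVec (vL n)) + B.mulVec (F.mulVec (vL n))) +
        (t^2) • E.mulVec (F.mulVec (vL n))) := by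
      intro t
      simp only [Matrix.add_mulVec, Matrix.mulVec_add, Matrix.smul_mulVec, Matrix.mulVec_smul, smul_add, smul_smul]
      rw [pow_two]
      abel
    have hl : HasDerivAt (fun t : ℝ => (B + t • E).mulVec (u n + (C + t • F).mulVec (vL n)))
        (E.mulVec (u n + C.mulVec (vL n)) + B.mulVec (F.mulVec (vL n))) 0 := by
      simp_rw [e]
      have h1 := ((hasDerivAt_id (0:ℝ)).smul_const (E.mulVec (u n + C.mulVec (vL n)) + B.mulVec (F.mulVec (vL n))))
      have h2 := ((hasDerivAt_pow 2 (0:ℝ)).smul_const (E.mulVec (F.mulVec (vL n))))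
      have h3 := (h1.add h2).const_add (B.mulVec (u n + C.mulVec (vL n)))
      simpa using h3
    have hf : HasFDerivAt (fun z => ℓ z (y n))
        (fderiv ℝ (fun z => ℓ z (y n)) (B.mulVec (u n + C.mulVec (vL n))))
        ((B + (0:ℝ) • E).mulVec (u n + (C + (0:ℝ) • F).mulVec (vL n))) := by
      simpa using (hdiff (y n) (B.mulVec (u n + C.mulVec (vL n)))).hasFDerivAt
    exact hf.comp_hasDerivAt (0:ℝ) hl
  have hs := (HasDerivAt.fun_sum (fun n (_ : n ∈ Finset.univ) => hn n)).const_mul (1 / (N : ℝ))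
  simp_rw [hR] at hmin
  have h0 := hmin.hasDerivAt_eq_zero hs
  have hN' : (1 / (N:ℝ)) ≠ 0 := by positivity
  exact (mul_eq_zero.mp h0).resolve_left hN'

lemma resnest_aux_vL {N M No KL : ℕ} (hN : 0 < N) (hMNo : M ≥ No) (y : Fin N → Fin No → ℝ)
    (vL : Fin N → Fin KL → ℝ) (u : Fin N → Fin M → ℝ)
    (ℓ : (Fin No → ℝ) → (Fin No → ℝ) → ℝ)
    (hdiff : ∀ yy, Differentiable ℝ (fun yhat => ℓ yhat yy))
    (R : Matrix (Fin M) (Fin KL) ℝ × Matrix (Fin No) (Fin M) ℝ → ℝ)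
    (hR : ∀ p, R p =
      (1 / (N : ℝ)) * ∑ n, ℓ (p.2.mulVec (u n + p.1.mulVec (vL n))) (y n))
    (C : Matrix (Fin M) (Fin KL) ℝ) (B : Matrix (Fin No) (Fin M) ℝ)
    (hp : IsLocalMin R (C, B)) (H : Matrix (Fin No) (Fin KL) ℝ) :
    ∑ n, fderiv ℝ (fun z => ℓ z (y n)) (B.mulVec (u n + C.mulVec (vL n)))
      (H.mulVec (vL n)) = 0 := by
  have hcrit := resnest_aux_crit hN y vL u ℓ hdiff R hR
  by_cases hs : Function.Surjective B.mulVec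
  · obtain ⟨S, hS⟩ := Matrix.mulVec_surjective_iff_exists_right_inverse.mp hs
    have := hcrit C B hp (S * H) 0
    simpa [Matrix.mulVec_mulVec, ← Matrix.mul_assoc, hS] using this
  · have hni : ¬ Function.Injective B.mulVecLin := by
      intro hi
      have h1 := LinearMap.finrank_le_finrank_of_injective hi
      simp at h1
      have h2 : M = No := le_antisymm h1 hMNo
      apply hs
      have := (LinearMap.injective_iff_surjective_of_finrank_eq_finrank (f := B.mulVecLin)
        (by simp [h2])).mp hi
      exact this
    obtain ⟨w, hw, hw0⟩ : ∃ w, B.mulVec w = 0 ∧ w ≠ 0 := by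
      by_contra hcon
      push Not at hcon
      exact hni ((injective_iff_map_eq_zero _).mpr hcon)
    have hww : w ⬝ᵥ w ≠ 0 := by simpa [dotProduct_self_eq_zero] using hw0
    have key : ∀ (a : Fin KL → ℝ) (e : Fin No → ℝ),
        ∑ n, fderiv ℝ (fun z => ℓ z (y n)) (B.mulVec (u n + C.mulVec (vL n)))
          ((a ⬝ᵥ vL n) • e) = 0 := by
      intro a e
      have hBw : ∀ (t : ℝ) (n : Fin N),
          B.mulVec (u n + (C + t • Matrix.vecMulVec w a).mulVec (vL n)) =
          B.mulVec (u n + C.mulVec (vL n)) := by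
        intro t n
        simp [Matrix.add_mulVec, Matrix.mulVec_add, Matrix.smul_mulVec, Matrix.mulVec_smul,
          Matrix.vecMulVec_mulVec, hw]
      have hcont : ContinuousAt (fun t : ℝ => ((C + t • Matrix.vecMulVec w a, B) :
          Matrix (Fin M) (Fin KL) ℝ × Matrix (Fin No) (Fin M) ℝ)) 0 := by
        fun_prop
      have hev : ∀ᶠ q in nhds (C, B), ∀ᶠ r in nhds q, R (C, B) ≤ R r :=
        eventually_eventually_nhds.mpr hp
      have hev2 : ∀ᶠ t : ℝ in nhds 0, ∀ᶠ r in nhds (C + t • Matrix.vecMulVec w a, B),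
          R (C, B) ≤ R r := by
        refine Filter.Tendsto.eventually
          (p := fun q => ∀ᶠ r in nhds q, R (C, B) ≤ R r) hcont ?_
        simpa using hev
      have hev3 := (hev2.filter_mono (nhdsWithin_le_nhds (s := {0}ᶜ))).and
        (self_mem_nhdsWithin : ∀ᶠ t : ℝ in nhdsWithin 0 {0}ᶜ, t ∈ ({0}ᶜ : Set ℝ))
      obtain ⟨t, ht, ht0⟩ := hev3.exists
      have ht0' : t ≠ 0 := ht0
      have hRe : R (C + t • Matrix.vecMulVec w a, B) = R (C, B) := by
        simp only [hR, hBw]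
      have hloc : IsLocalMin R (C + t • Matrix.vecMulVec w a, B) := by
        show ∀ᶠ r in nhds _, R (C + t • Matrix.vecMulVec w a, B) ≤ R r
        rw [hRe]; exact ht
      have c1 := hcrit _ B hloc 0 (t⁻¹ • (w ⬝ᵥ w)⁻¹ • Matrix.vecMulVec e w)
      have c2 := hcrit C B hp 0 (t⁻¹ • (w ⬝ᵥ w)⁻¹ • Matrix.vecMulVec e w)
      simp only [hBw] at c1
      have c3 := congrArg₂ (· - ·) c1 c2
      simp only [← Finset.sum_sub_distrib, ← map_sub, sub_zero] at c3
      refine Eq.trans (Finset.sum_congr rfl fun n _ => ?_) c3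
      congr 1
      ext i
      simp [Matrix.add_mulVec, Matrix.mulVec_add, Matrix.smul_mulVec, Matrix.mulVec_smul,
          Matrix.vecMulVec_mulVec]
      field_simp
    have hH : ∀ n, H.mulVec (vL n) = ∑ j, ((Pi.single j 1 : Fin KL → ℝ) ⬝ᵥ vL n) • H.col j := by
      intro n
      ext i
      simp only [Finset.sum_apply, Pi.smul_apply, smul_eq_mul,
        Matrix.mulVec, dotProduct, Matrix.col_apply]
      refine Finset.sum_congr rfl fun j _ => ?_
      rw [mul_comm]
      congr 1
      simp [Pi.single_apply]
    simp_rw [hH, map_sum]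
    rw [Finset.sum_comm]
    exact Finset.sum_eq_zero fun j _ => key _ _


theorem resnest_local_min_strictly_beats_linear_predictor
    (N L M No : ℕ) (hN : 0 < N) (hL : 1 ≤ L) (hM : 0 < M) (hNo : 0 < No)
    -- feature dimensions, K_0 = N_in is the input dimension
    (K : ℕ → ℕ)
    -- inputs x^n ∈ ℝ^{N_in} and targets y^n ∈ ℝ^{N_o}
    (x : Fin N → Fin (K 0) → ℝ)
    (y : Fin N → Fin No → ℝ)
    -- fixed matrices W_i ∈ ℝ^{M×K_i}, i = 0, …, L−1
    (W : (i : ℕ) → Matrix (Fin M) (Fin (K i)) ℝ)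
    -- feature vectors v_i^n ∈ ℝ^{K_i}, with v_0^n = x^n
    (v : (i : ℕ) → Fin N → Fin (K i) → ℝ)
    (hv0 : ∀ n, v 0 n = x n)
    -- u^n = Σ_{i=0}^{L−1} W_i v_i^n
    (u : Fin N → Fin M → ℝ)
    (hu : ∀ n, u n = ∑ i ∈ Finset.range L, (W i).mulVec (v i n))
    -- the loss function
    (ℓ : (Fin No → ℝ) → (Fin No → ℝ) → ℝ)
    -- Assumption 2: ℓ(yhat, y) is differentiable and convex in yhat for every y
    (hdiff : ∀ yy, Differentiable ℝ (fun yhat => ℓ yhat yy))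
    (hconv : ∀ yy, ConvexOn ℝ Set.univ (fun yhat => ℓ yhat yy))
    -- Assumption 3: M ≥ N_o
    (hMNo : M ≥ No)
    -- Assumption 4: (c_0, …, c_{L−1}) ↦ Σ_{i=0}^{L−1} W_i c_i is injective
    (hinj : Function.Injective
      (fun c : (i : Fin L) → Fin (K i.val) → ℝ => ∑ i : Fin L, (W i.val).mulVec (c i)))
    -- fixed-feature ResNEst empirical risk
    (R : Matrix (Fin M) (Fin (K L)) ℝ × Matrix (Fin No) (Fin M) ℝ → ℝ)
    (hR : ∀ p, R p =
      (1 / (N : ℝ)) * ∑ n, ℓ (p.2.mulVec (u n + p.1.mulVec (v L n))) (y n))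
    -- A-ResNEst empirical risk
    (A : ((i : Fin (L + 1)) → Matrix (Fin No) (Fin (K i.val)) ℝ) → ℝ)
    (hA : ∀ H, A H =
      (1 / (N : ℝ)) * ∑ n, ℓ (∑ i : Fin (L + 1), (H i).mulVec (v i.val n)) (y n))
    -- the nonlinear features strictly help:
    -- inf over all (H_0, …, H_L) < inf over (H_0, 0, …, 0)
    (hstrict : (⨅ H, A H) <
      ⨅ H0 : Matrix (Fin No) (Fin (K 0)) ℝ,
        A (Function.update (0 : (i : Fin (L + 1)) → Matrix (Fin No) (Fin (K i.val)) ℝ)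
            ⟨0, Nat.succ_pos L⟩ H0))
    -- a local minimizer of R
    (p : Matrix (Fin M) (Fin (K L)) ℝ × Matrix (Fin No) (Fin M) ℝ)
    (hp : IsLocalMin R p) :
    ∀ A' : Matrix (Fin No) (Fin (K 0)) ℝ,
      R p < (1 / (N : ℝ)) * ∑ n, ℓ (A'.mulVec (x n)) (y n) := by
  have hcrit := resnest_aux_crit hN y (v L) u ℓ hdiff R hR p.1 p.2 hp
  have hvL := resnest_aux_vL hN hMNo y (v L) u ℓ hdiff R hR p.1 p.2 hp
  have hEu : ∀ E : Matrix (Fin No) (Fin M) ℝ,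
      ∑ n, fderiv ℝ (fun z => ℓ z (y n)) (p.2.mulVec (u n + p.1.mulVec (v L n)))
        (E.mulVec (u n)) = 0 := by
    intro E
    have h1 := hcrit 0 E
    have h2 := hvL (E * p.1)
    simp only [Matrix.mulVec_add, map_add, Finset.sum_add_distrib, Matrix.zero_mulVec,
      Matrix.mulVec_zero, map_zero, Finset.sum_const_zero, add_zero, Matrix.mulVec_mulVec] at h1 h2 ⊢
    linarith
  have hle : ∀ H, R p ≤ A H := by
    intro H
    let T : ((i : Fin L) → Fin (K i.val) → ℝ) →ₗ[ℝ] (Fin M → ℝ) :=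
      ∑ i : Fin L, (W i.val).mulVecLin ∘ₗ LinearMap.proj i
    have hT : ∀ c, T c = ∑ i : Fin L, (W i.val).mulVec (c i) := by
      intro c; simp [T]
    have hTinj : Function.Injective T := by
      intro c d hcd
      apply hinj
      simpa [hT] using hcd
    obtain ⟨g, hg⟩ := T.exists_leftInverse_of_injective (LinearMap.ker_eq_bot.mpr hTinj)
    let S : ((i : Fin L) → Fin (K i.val) → ℝ) →ₗ[ℝ] (Fin No → ℝ) :=
      ∑ i : Fin L, (H i.castSucc).mulVecLin ∘ₗ LinearMap.proj i
    have hS : ∀ c, S c = ∑ i : Fin L, (H i.castSucc).mulVec (c i) := by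
      intro c; simp [S]
    have hz : ∀ n, ∑ i : Fin (L + 1), (H i).mulVec (v i.val n) =
        (LinearMap.toMatrix' (S ∘ₗ g)).mulVec (u n) + (H (Fin.last L)).mulVec (v L n) := by
      intro n
      have hun : u n = T (fun i => v i.val n) := by
        rw [hT, hu, Finset.sum_range]
      rw [Fin.sum_univ_castSucc, LinearMap.toMatrix'_mulVec, hun, LinearMap.comp_apply,
        ← LinearMap.comp_apply g T, hg, LinearMap.id_apply, hS]
      rfl
    rw [hR, hA]
    apply mul_le_mul_of_nonneg_left _ (by positivity)
    have hc := fun n => resnest_aux_convex (fun z => ℓ z (y n)) (hdiff (y n)) (hconv (y n))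
      (p.2.mulVec (u n + p.1.mulVec (v L n))) (∑ i : Fin (L + 1), (H i).mulVec (v i.val n))
    have hsum := Finset.sum_le_sum (fun n (_ : n ∈ Finset.univ) => hc n)
    have hzero : ∑ n, fderiv ℝ (fun z => ℓ z (y n)) (p.2.mulVec (u n + p.1.mulVec (v L n)))
        (∑ i : Fin (L + 1), (H i).mulVec (v i.val n) - p.2.mulVec (u n + p.1.mulVec (v L n))) = 0 := by
      have h1 := hEu (LinearMap.toMatrix' (S ∘ₗ g))
      have h2 := hvL (H (Fin.last L))
      have h3 := hcrit 0 p.2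
      simp only [Matrix.zero_mulVec, Matrix.mulVec_zero, add_zero] at h3
      simp only [hz]
      simp only [map_sub, map_add, Finset.sum_sub_distrib, Finset.sum_add_distrib] at h1 h2 h3 ⊢
      rw [h3]
      erw [h1, h2]
      simp
    rw [Finset.sum_add_distrib, hzero, add_zero] at hsum
    exact hsum
  intro A'
  have h1 : R p ≤ ⨅ H, A H := le_ciInf hle
  have h2 := ciInf_le (f := fun H0 : Matrix (Fin No) (Fin (K 0)) ℝ =>
        A (Function.update (0 : (i : Fin (L + 1)) → Matrix (Fin No) (Fin (K i.val)) ℝ)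
            ⟨0, Nat.succ_pos L⟩ H0)) ⟨R p, by rintro _ ⟨H, rfl⟩; exact hle _⟩ A'
  refine lt_of_lt_of_le (lt_of_le_of_lt h1 hstrict) (h2.trans (le_of_eq ?_))
  simp only [hA]
  congr 1
  refine Finset.sum_congr rfl fun n _ => ?_
  congr 1
  rw [Finset.sum_eq_single (⟨0, Nat.succ_pos L⟩ : Fin (L + 1))]
  · rw [Function.update_self, ← hv0]
  · intro b _ hb
    rw [Function.update_of_ne hb]
    simp
  · simp
end

section
/- Suppose the loss is the squared loss ℓ(ŷ, y) = ‖ŷ − y‖², Assumption 1 holds, M ≥ N_o (Assumption 3), and Assumption 4 holds (the linear map (c_0,…,c_{L−1}) ↦ Σ_{i=0}^{L−1} W_i c_i is injective). Then at every saddle point (W_L*, W_{L+1}*) of the fixed-feature ResNEst empirical risk R (i.e., every critical point of R that is neither a local minimizer nor a local maximizer), the matrix W_{L+1}* is rank-deficient: rank(W_{L+1}*) < N_o. -/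
/-!
STATEMENT 9 (Theorem 2(a)): Under the squared loss, Assumption 1, Assumption 3
(M ≥ N_o) and Assumption 4 (injectivity), at every saddle point (critical point that
is neither a local minimizer nor a local maximizer) of the fixed-feature ResNEst risk
`R`, the matrix `W_{L+1}*` is rank-deficient: rank(W_{L+1}*) < N_o.
-/

attribute [local instance] Matrix.normedAddCommGroup Matrix.normedSpace

theorem quad_aux {N No : ℕ} (hN : 0 < N) (e d : Fin N → Fin No → ℝ)
    (h : HasDerivAt (fun t : ℝ => (1 / (N : ℝ)) * ∑ n, ∑ j, (e n j + t * d n j) ^ 2) 0 0) :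
    ∑ n, ∑ j, e n j * d n j = 0 := by
  have h2 : HasDerivAt (fun t : ℝ => (1 / (N : ℝ)) * ∑ n, ∑ j, (e n j + t * d n j) ^ 2)
      ((1 / (N : ℝ)) * ∑ n, ∑ j, 2 * (e n j * d n j)) 0 := by
    refine HasDerivAt.const_mul _ ?_
    refine HasDerivAt.fun_sum fun n _ => HasDerivAt.fun_sum fun j _ => ?_
    have h3 := (((hasDerivAt_id (0 : ℝ)).mul_const (d n j)).const_add (e n j)).pow 2
    refine h3.congr_deriv ?_
    simp only [id, Nat.cast_ofNat]
    ring
  have h3 := h2.unique h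
  have hN' : (N : ℝ) ≠ 0 := by positivity
  simp only [← Finset.mul_sum] at h3
  simpa [hN'] using h3

theorem resnest_saddle_point_rank_deficient
    (N L M No : ℕ) (hN : 0 < N) (hL : 1 ≤ L) (hM : 0 < M) (hNo : 0 < No)
    (K : ℕ → ℕ)
    -- fixed matrices W_i ∈ ℝ^{M×K_i}, i = 0, …, L−1
    (W : (i : ℕ) → Matrix (Fin M) (Fin (K i)) ℝ)
    -- feature vectors v_i^n ∈ ℝ^{K_i} and targets y^n ∈ ℝ^{N_o}
    (v : (i : ℕ) → Fin N → Fin (K i) → ℝ)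
    (y : Fin N → Fin No → ℝ)
    -- u^n = Σ_{i=0}^{L−1} W_i v_i^n
    (u : Fin N → Fin M → ℝ)
    (hu : ∀ n, u n = ∑ i ∈ Finset.range L, (W i).mulVec (v i n))
    -- squared loss ℓ(yhat, y) = ‖yhat − y‖²
    (ℓ : (Fin No → ℝ) → (Fin No → ℝ) → ℝ)
    (hℓ : ∀ yhat yy, ℓ yhat yy = ∑ j, (yhat j - yy j) ^ 2)
    -- Assumption 1: Σ_n v_L^n (y^n)^T ≠ 0 and Σ_n v_L^n (v_L^n)^T invertible
    (hA1 : (Matrix.of fun k j => ∑ n, v L n k * y n j :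
        Matrix (Fin (K L)) (Fin No) ℝ) ≠ 0)
    (hA1' : IsUnit (Matrix.of fun k k' => ∑ n, v L n k * v L n k' :
        Matrix (Fin (K L)) (Fin (K L)) ℝ))
    -- Assumption 3: M ≥ N_o
    (hMNo : M ≥ No)
    -- Assumption 4: (c_0, …, c_{L−1}) ↦ Σ_{i=0}^{L−1} W_i c_i is injective
    (hinj : Function.Injective
      (fun c : (i : Fin L) → Fin (K i.val) → ℝ => ∑ i : Fin L, (W i.val).mulVec (c i)))
    -- fixed-feature ResNEst empirical risk
    (R : Matrix (Fin M) (Fin (K L)) ℝ × Matrix (Fin No) (Fin M) ℝ → ℝ)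
    (hR : ∀ p, R p =
      (1 / (N : ℝ)) * ∑ n, ℓ (p.2.mulVec (u n + p.1.mulVec (v L n))) (y n))
    -- a saddle point of R
    (p : Matrix (Fin M) (Fin (K L)) ℝ × Matrix (Fin No) (Fin M) ℝ)
    (hcrit : fderiv ℝ R p = 0)
    (hmin : ¬ IsLocalMin R p) (hmax : ¬ IsLocalMax R p) :
    p.2.rank < No := by
  by_contra hlt
  apply hmin
  have hrank : p.2.rank = No := by
    have h1 := Matrix.rank_le_height p.2
    omega
  have hsurj : Function.Surjective p.2.mulVec := by
    have h1 : LinearMap.range p.2.mulVecLin = ⊤ := by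
      apply Submodule.eq_top_of_finrank_eq
      rw [← Matrix.rank, hrank]
      simp
    exact LinearMap.range_eq_top.mp h1
  obtain ⟨B, hB⟩ := Matrix.mulVec_surjective_iff_exists_right_inverse.mp hsurj
  have hRe : R = fun p => (1 / (N : ℝ)) * ∑ n, ∑ j,
      ((p.2.mulVec (u n + p.1.mulVec (v L n))) j - y n j) ^ 2 := by
    funext p
    simp only [hR, hℓ]
  have hd1 : ∀ i j, Differentiable ℝ
      (fun p : Matrix (Fin M) (Fin (K L)) ℝ × Matrix (Fin No) (Fin M) ℝ => p.1 i j) := by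
    intro i j
    exact differentiable_pi.mp (differentiable_pi.mp differentiable_fst i) j
  have hd2 : ∀ i j, Differentiable ℝ
      (fun p : Matrix (Fin M) (Fin (K L)) ℝ × Matrix (Fin No) (Fin M) ℝ => p.2 i j) := by
    intro i j
    exact differentiable_pi.mp (differentiable_pi.mp differentiable_snd i) j
  have hdiff : Differentiable ℝ R := by
    rw [hRe]
    simp only [Matrix.mulVec, dotProduct, Pi.add_apply]
    fun_prop
  have hfd : HasFDerivAt R (0 : _ →L[ℝ] ℝ) p := hcrit ▸ (hdiff p).hasFDerivAt
  have hline : ∀ q, HasDerivAt (fun t : ℝ => R (p + t • q)) 0 0 := by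
    intro q
    have hg : HasDerivAt (fun t : ℝ => p + t • q) q 0 := by
      have h5 := ((hasDerivAt_id (0 : ℝ)).smul_const q).const_add p
      rw [one_smul] at h5
      exact h5
    have hfd' : HasFDerivAt R (0 : _ →L[ℝ] ℝ) (p + (0 : ℝ) • q) := by simpa using hfd
    exact hfd'.comp_hasDerivAt (0 : ℝ) hg
  set x : Fin N → Fin M → ℝ := fun n => u n + p.1.mulVec (v L n) with hx
  set e : Fin N → Fin No → ℝ := fun n => p.2.mulVec (x n) - y n with he
  have hv : ∀ C : Matrix (Fin No) (Fin (K L)) ℝ,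
      ∑ n, ∑ j, e n j * (C.mulVec (v L n)) j = 0 := by
    intro C
    apply quad_aux hN
    convert hline (B * C, 0) using 1
    funext t
    rw [hRe]
    have key : ∀ n, p.2.mulVec (u n + (p.1 + t • (B * C)).mulVec (v L n))
        = p.2.mulVec (x n) + t • C.mulVec (v L n) := by
      intro n
      rw [Matrix.add_mulVec, ← add_assoc, Matrix.mulVec_add, Matrix.smul_mulVec,
        Matrix.mulVec_smul, Matrix.mulVec_mulVec, ← Matrix.mul_assoc, hB, Matrix.one_mul]
    simp only [Prod.fst_add, Prod.snd_add, Prod.smul_fst, Prod.smul_snd, smul_zero, add_zero, key]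
    simp only [he, Pi.add_apply, Pi.sub_apply, Pi.smul_apply, smul_eq_mul]
    refine congrArg _ (Finset.sum_congr rfl fun n _ => Finset.sum_congr rfl fun j _ => ?_)
    ring
  have hG : ∀ G : Matrix (Fin No) (Fin M) ℝ,
      ∑ n, ∑ j, e n j * (G.mulVec (x n)) j = 0 := by
    intro G
    apply quad_aux hN
    convert hline (0, G) using 1
    funext t
    rw [hRe]
    simp only [Prod.fst_add, Prod.snd_add, Prod.smul_fst, Prod.smul_snd, smul_zero, add_zero,
      Matrix.add_mulVec, Matrix.smul_mulVec]
    simp only [he, hx, Pi.add_apply, Pi.sub_apply, Pi.smul_apply, smul_eq_mul]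
    refine congrArg _ (Finset.sum_congr rfl fun n _ => Finset.sum_congr rfl fun j _ => ?_)
    ring
  refine Filter.Eventually.of_forall fun q => ?_
  have hd : ∀ n, q.2.mulVec (u n + q.1.mulVec (v L n)) = p.2.mulVec (x n)
      + ((q.2 - p.2).mulVec (x n) + (q.2 * (q.1 - p.1)).mulVec (v L n)) := by
    intro n
    simp only [hx, ← Matrix.mulVec_mulVec, Matrix.sub_mulVec, Matrix.mulVec_add, Matrix.mulVec_sub]
    abel
  simp only [hRe, hd]
  refine mul_le_mul_of_nonneg_left ?_ (by positivity)
  have h1 := hG (q.2 - p.2)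
  have h2 := hv (q.2 * (q.1 - p.1))
  have h3 : ∑ n, ∑ j, (p.2.mulVec (x n) j - y n j) ^ 2 = ∑ n, ∑ j,
      ((p.2.mulVec (x n) j - y n j) ^ 2 + 2 * (e n j * ((q.2 - p.2).mulVec (x n)) j)
        + 2 * (e n j * ((q.2 * (q.1 - p.1)).mulVec (v L n)) j)) := by
    simp only [Finset.sum_add_distrib, ← Finset.mul_sum, h1, h2]
    simp
  refine h3.le.trans ?_
  refine Finset.sum_le_sum fun n _ => Finset.sum_le_sum fun j _ => ?_
  simp only [he, Pi.add_apply, Pi.sub_apply]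
  nlinarith [sq_nonneg (((q.2 - p.2).mulVec (x n)) j + ((q.2 * (q.1 - p.1)).mulVec (v L n)) j)]
end

section
/- Suppose the loss is the squared loss ℓ(ŷ, y) = ‖ŷ − y‖², Assumption 1 holds, M ≥ N_o (Assumption 3), and Assumption 4 holds (the linear map (c_0,…,c_{L−1}) ↦ Σ_{i=0}^{L−1} W_i c_i is injective). Then at every saddle point (W_L*, W_{L+1}*) of the fixed-feature ResNEst empirical risk R there exists at least one direction of strictly negative curvature: there are matrices (D_L, D_{L+1}) ∈ ℝ^{M×K_L} × ℝ^{N_o×M} such that the second derivative at t = 0 of the function t ↦ R(W_L* + t D_L, W_{L+1}* + t D_{L+1}) is strictly negative. -/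
/-!
STATEMENT 10 (Theorem 2(b)): Under the squared loss, Assumption 1, Assumption 3
(M ≥ N_o) and Assumption 4 (injectivity), at every saddle point of the fixed-feature
ResNEst risk `R` there is a direction of strictly negative curvature: there exist
(D_L, D_{L+1}) such that d²/dt² R(W_L* + t D_L, W_{L+1}* + t D_{L+1}) |_{t=0} < 0.
-/

attribute [local instance] Matrix.normedAddCommGroup Matrix.normedSpace

lemma aux_deriv {N No : ℕ} (c : ℝ) (f a b : Fin N → Fin No → ℝ) (t : ℝ) :
    HasDerivAt (fun t : ℝ => c * ∑ n, ∑ j, (f n j + t * a n j + t ^ 2 * b n j) ^ 2)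
      (c * ∑ n, ∑ j, 2 * (f n j + t * a n j + t ^ 2 * b n j) * (a n j + 2 * t * b n j)) t := by
  refine HasDerivAt.const_mul c ?_
  refine HasDerivAt.fun_sum fun n _ => ?_
  refine HasDerivAt.fun_sum fun j _ => ?_
  have h1 : HasDerivAt (fun t : ℝ => f n j + t * a n j + t ^ 2 * b n j)
      (a n j + 2 * t * b n j) t := by
    have := (((hasDerivAt_id t).mul_const (a n j)).const_add (f n j)).add
      (((hasDerivAt_id t).pow 2).mul_const (b n j))
    exact this.congr_deriv (by simp)
  exact (h1.pow 2).congr_deriv (by simp)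

lemma aux_deriv2 {N No : ℕ} (c : ℝ) (f a b : Fin N → Fin No → ℝ) :
    iteratedDeriv 2 (fun t : ℝ => c * ∑ n, ∑ j, (f n j + t * a n j + t ^ 2 * b n j) ^ 2) 0
      = c * ∑ n, ∑ j, (2 * a n j ^ 2 + 4 * f n j * b n j) := by
  rw [iteratedDeriv_succ, iteratedDeriv_one]
  have : deriv (fun t : ℝ => c * ∑ n, ∑ j, (f n j + t * a n j + t ^ 2 * b n j) ^ 2) =
      fun t => c * ∑ n, ∑ j, 2 * (f n j + t * a n j + t ^ 2 * b n j) * (a n j + 2 * t * b n j) :=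
    funext fun t => (aux_deriv c f a b t).deriv
  rw [this]
  refine HasDerivAt.deriv ?_
  refine HasDerivAt.const_mul c ?_
  refine HasDerivAt.fun_sum fun n _ => ?_
  refine HasDerivAt.fun_sum fun j _ => ?_
  have h1 : HasDerivAt (fun t : ℝ => f n j + t * a n j + t ^ 2 * b n j)
      (a n j) 0 := by
    have := (((hasDerivAt_id (0:ℝ)).mul_const (a n j)).const_add (f n j)).add
      (((hasDerivAt_id (0:ℝ)).pow 2).mul_const (b n j))
    exact this.congr_deriv (by simp)
  have h2 : HasDerivAt (fun t : ℝ => a n j + 2 * t * b n j) (2 * b n j) 0 := by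
    have := ((((hasDerivAt_id (0:ℝ)).const_mul 2).mul_const (b n j)).const_add (a n j))
    exact this.congr_deriv (by simp)
  exact ((h1.const_mul 2).mul h2).congr_deriv (by simp; ring)

theorem resnest_saddle_point_negative_curvature
    (N L M No : ℕ) (hN : 0 < N) (hL : 1 ≤ L) (hM : 0 < M) (hNo : 0 < No)
    (K : ℕ → ℕ)
    -- fixed matrices W_i ∈ ℝ^{M×K_i}, i = 0, …, L−1
    (W : (i : ℕ) → Matrix (Fin M) (Fin (K i)) ℝ)
    -- feature vectors v_i^n ∈ ℝ^{K_i} and targets y^n ∈ ℝ^{N_o}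
    (v : (i : ℕ) → Fin N → Fin (K i) → ℝ)
    (y : Fin N → Fin No → ℝ)
    -- u^n = Σ_{i=0}^{L−1} W_i v_i^n
    (u : Fin N → Fin M → ℝ)
    (hu : ∀ n, u n = ∑ i ∈ Finset.range L, (W i).mulVec (v i n))
    -- squared loss ℓ(yhat, y) = ‖yhat − y‖²
    (ℓ : (Fin No → ℝ) → (Fin No → ℝ) → ℝ)
    (hℓ : ∀ yhat yy, ℓ yhat yy = ∑ j, (yhat j - yy j) ^ 2)
    -- Assumption 1: Σ_n v_L^n (y^n)^T ≠ 0 and Σ_n v_L^n (v_L^n)^T invertible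
    (hA1 : (Matrix.of fun k j => ∑ n, v L n k * y n j :
        Matrix (Fin (K L)) (Fin No) ℝ) ≠ 0)
    (hA1' : IsUnit (Matrix.of fun k k' => ∑ n, v L n k * v L n k' :
        Matrix (Fin (K L)) (Fin (K L)) ℝ))
    -- Assumption 3: M ≥ N_o
    (hMNo : M ≥ No)
    -- Assumption 4: (c_0, …, c_{L−1}) ↦ Σ_{i=0}^{L−1} W_i c_i is injective
    (hinj : Function.Injective
      (fun c : (i : Fin L) → Fin (K i.val) → ℝ => ∑ i : Fin L, (W i.val).mulVec (c i)))
    -- fixed-feature ResNEst empirical risk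
    (R : Matrix (Fin M) (Fin (K L)) ℝ × Matrix (Fin No) (Fin M) ℝ → ℝ)
    (hR : ∀ p, R p =
      (1 / (N : ℝ)) * ∑ n, ℓ (p.2.mulVec (u n + p.1.mulVec (v L n))) (y n))
    -- a saddle point of R
    (p : Matrix (Fin M) (Fin (K L)) ℝ × Matrix (Fin No) (Fin M) ℝ)
    (hcrit : fderiv ℝ R p = 0)
    (hmin : ¬ IsLocalMin R p) (hmax : ¬ IsLocalMax R p) :
    ∃ D : Matrix (Fin M) (Fin (K L)) ℝ × Matrix (Fin No) (Fin M) ℝ,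
      iteratedDeriv 2 (fun t : ℝ => R (p.1 + t • D.1, p.2 + t • D.2)) 0 < 0 := by
  classical
  obtain ⟨A, B⟩ := p
  have hNpos : (0:ℝ) < 1 / (N : ℝ) := by positivity
  obtain ⟨x, hx⟩ : ∃ x : Fin N → Fin M → ℝ, ∀ n, x n = u n + A.mulVec (v L n) :=
    ⟨_, fun _ => rfl⟩
  obtain ⟨F, hF⟩ : ∃ F : Fin N → Fin No → ℝ, ∀ n j, F n j = (B.mulVec (x n)) j - y n j :=
    ⟨_, fun _ _ => rfl⟩
  -- expansion along a line
  have hline : ∀ (D : Matrix (Fin M) (Fin (K L)) ℝ × Matrix (Fin No) (Fin M) ℝ) (t : ℝ),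
      R (A + t • D.1, B + t • D.2) = (1 / (N:ℝ)) * ∑ n, ∑ j,
        (F n j + t * (B.mulVec (D.1.mulVec (v L n)) j + D.2.mulVec (x n) j)
          + t ^ 2 * (D.2.mulVec (D.1.mulVec (v L n)) j)) ^ 2 := by
    intro D t
    rw [hR]
    congr 1
    refine Finset.sum_congr rfl fun n _ => ?_
    rw [hℓ]
    refine Finset.sum_congr rfl fun j _ => ?_
    congr 1
    rw [hF, hx]
    simp only [Matrix.add_mulVec, Matrix.mulVec_add, Matrix.smul_mulVec, Matrix.mulVec_smul,
      Pi.add_apply, Pi.smul_apply, smul_eq_mul]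
    ring
  have hdiff : DifferentiableAt ℝ R (A, B) := by
    have hRf : R = fun p => (1 / (N : ℝ)) * ∑ n, ∑ j,
        (∑ m, p.2 j m * (u n m + ∑ k, p.1 m k * v L n k) - y n j) ^ 2 := by
      funext p
      rw [hR]
      simp only [hℓ, Matrix.mulVec, dotProduct, Pi.add_apply]
    have e1 : ∀ m k, DifferentiableAt ℝ
        (fun p : Matrix (Fin M) (Fin (K L)) ℝ × Matrix (Fin No) (Fin M) ℝ => p.1 m k) (A, B) := by
      intro m k
      exact ((LinearMap.toContinuousLinearMap (Matrix.entryLinearMap ℝ ℝ m k)).differentiableAt).comp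
        (A, B) differentiableAt_fst
    have e2 : ∀ m k, DifferentiableAt ℝ
        (fun p : Matrix (Fin M) (Fin (K L)) ℝ × Matrix (Fin No) (Fin M) ℝ => p.2 m k) (A, B) := by
      intro m k
      exact ((LinearMap.toContinuousLinearMap (Matrix.entryLinearMap ℝ ℝ m k)).differentiableAt).comp
        (A, B) differentiableAt_snd
    rw [hRf]
    refine DifferentiableAt.const_mul ?_ _
    refine DifferentiableAt.fun_sum fun n _ => ?_
    refine DifferentiableAt.fun_sum fun j _ => ?_
    refine DifferentiableAt.pow ?_ 2
    refine DifferentiableAt.sub_const ?_ _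
    refine DifferentiableAt.fun_sum fun m _ => ?_
    refine (e2 j m).mul ?_
    refine DifferentiableAt.const_add _ ?_
    refine DifferentiableAt.fun_sum fun k _ => ?_
    exact (e1 m k).mul_const _
  -- first order condition
  have hfoc : ∀ (D : Matrix (Fin M) (Fin (K L)) ℝ × Matrix (Fin No) (Fin M) ℝ),
      ∑ n, ∑ j, F n j * (B.mulVec (D.1.mulVec (v L n)) j + D.2.mulVec (x n) j) = 0 := by
    intro D
    have h1 : HasDerivAt (fun t : ℝ => R ((A, B) + t • D)) 0 0 := by
      have hf : HasFDerivAt R (0 : _ →L[ℝ] ℝ) ((A, B) + (0:ℝ) • D) := by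
        have := hdiff.hasFDerivAt
        rw [hcrit] at this
        simpa using this
      have hl : HasDerivAt (fun t : ℝ => (A, B) + t • D) D 0 := by
        exact (((hasDerivAt_id (0:ℝ)).smul_const D).const_add (A, B)).congr_deriv (by simp)
      exact (hf.comp_hasDerivAt (0:ℝ) hl).congr_deriv rfl
    have h2 := aux_deriv (1 / (N:ℝ)) F
      (fun n j => B.mulVec (D.1.mulVec (v L n)) j + D.2.mulVec (x n) j)
      (fun n j => D.2.mulVec (D.1.mulVec (v L n)) j) 0
    have h3 : (fun t : ℝ => R ((A, B) + t • D)) = _ := funext fun t => hline D t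
    rw [h3] at h1
    have h4 := h1.unique h2
    have h5 := (mul_eq_zero.mp h4.symm).resolve_left hNpos.ne'
    have h6 : 2 * ∑ n, ∑ j, F n j * (B.mulVec (D.1.mulVec (v L n)) j + D.2.mulVec (x n) j) = 0 := by
      rw [← h5, Finset.mul_sum]
      refine Finset.sum_congr rfl fun n _ => ?_
      rw [Finset.mul_sum]
      refine Finset.sum_congr rfl fun j _ => ?_
      ring
    linarith
  obtain ⟨G, hG⟩ : ∃ G : Matrix (Fin No) (Fin (K L)) ℝ, ∀ j k, G j k = ∑ n, F n j * v L n k :=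
    ⟨Matrix.of fun j k => ∑ n, F n j * v L n k, fun _ _ => rfl⟩
  have hGC : ∀ C : Matrix (Fin No) (Fin (K L)) ℝ,
      ∑ n, ∑ j, F n j * C.mulVec (v L n) j = ∑ j, ∑ k, C j k * G j k := by
    intro C
    rw [Finset.sum_comm]
    refine Finset.sum_congr rfl fun j _ => ?_
    simp only [hG, Matrix.mulVec, dotProduct, Finset.mul_sum]
    rw [Finset.sum_comm]
    refine Finset.sum_congr rfl fun k _ => Finset.sum_congr rfl fun n _ => ?_
    ring
  have hfocB : ∀ E : Matrix (Fin No) (Fin M) ℝ, ∑ n, ∑ j, F n j * E.mulVec (x n) j = 0 := by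
    intro E
    simpa using hfoc (0, E)
  have hfocA : ∀ E : Matrix (Fin M) (Fin (K L)) ℝ, ∑ j, ∑ k, (B * E) j k * G j k = 0 := by
    intro E
    rw [← hGC]
    simpa using hfoc (E, 0)
  -- if G = 0 then p is a global minimizer
  have hG0 : G ≠ 0 := by
    intro h0
    apply hmin
    refine Filter.Eventually.of_forall fun q => ?_
    obtain ⟨A', B'⟩ := q
    have hp := hline 0 0
    simp only [Prod.fst_zero, Prod.snd_zero, smul_zero, add_zero, zero_mul, ne_eq,
      OfNat.ofNat_ne_zero, not_false_eq_true, zero_pow] at hp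
    have hq : R (A', B') = (1 / (N:ℝ)) * ∑ n, ∑ j,
        (F n j + ((B' - B).mulVec (x n) j + (B' * (A' - A)).mulVec (v L n) j)) ^ 2 := by
      rw [hR]
      congr 1
      refine Finset.sum_congr rfl fun n _ => ?_
      rw [hℓ]
      refine Finset.sum_congr rfl fun j _ => ?_
      congr 1
      rw [hF, hx]
      simp only [Matrix.sub_mulVec, Matrix.mulVec_add, ← Matrix.mulVec_mulVec, Matrix.mulVec_sub,
        Pi.add_apply, Pi.sub_apply]
      ring
    rw [hp, hq]
    refine mul_le_mul_of_nonneg_left ?_ hNpos.le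
    have hz : ∑ n, ∑ j, F n j *
        ((B' - B).mulVec (x n) j + (B' * (A' - A)).mulVec (v L n) j) = 0 := by
      simp only [mul_add, Finset.sum_add_distrib]
      rw [hfocB, hGC, h0]
      simp
    have hle : ∑ n, ∑ j, (F n j ^ 2 + 2 * (F n j *
        ((B' - B).mulVec (x n) j + (B' * (A' - A)).mulVec (v L n) j))) ≤ ∑ n, ∑ j,
        (F n j + ((B' - B).mulVec (x n) j + (B' * (A' - A)).mulVec (v L n) j)) ^ 2 := by
      refine Finset.sum_le_sum fun n _ => Finset.sum_le_sum fun j _ => ?_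
      nlinarith [sq_nonneg ((B' - B).mulVec (x n) j + (B' * (A' - A)).mulVec (v L n) j)]
    simp only [Finset.sum_add_distrib, ← Finset.mul_sum] at hle
    rw [hz] at hle
    simpa using hle
  obtain ⟨j0, k0, hjk⟩ : ∃ j k, G j k ≠ 0 := by
    by_contra! h
    exact hG0 (Matrix.ext h)
  -- the column of G lies in the left kernel of B
  have hker : B.transpose.mulVec (fun j => G j k0) = 0 := by
    funext m
    have h := hfocA (Matrix.single m k0 1)
    simpa [Matrix.mul_apply, Matrix.single_apply, Matrix.mulVec, dotProduct, ite_and] using h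
  obtain ⟨z, hz0, hBz⟩ : ∃ z : Fin M → ℝ, z ≠ 0 ∧ B.mulVec z = 0 := by
    by_contra! h
    have hinjB : Function.Injective B.mulVecLin := by
      rw [← LinearMap.ker_eq_bot, LinearMap.ker_eq_bot']
      intro z hz
      by_contra hz0
      exact h z hz0 hz
    have hr : B.rank = M := by
      have := LinearMap.finrank_range_of_inj hinjB
      simpa [Matrix.rank] using this
    have hr2 : B.rank ≤ No := by simpa using B.rank_le_height
    have hMN : M = No := le_antisymm (hr ▸ hr2) hMNo
    have hinjT : Function.Injective B.transpose.mulVecLin := by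
      have h1 : B.transpose.rank = No := by rw [Matrix.rank_transpose, hr, hMN]
      have h2 := B.transpose.mulVecLin.finrank_range_add_finrank_ker
      have h3 : Module.finrank ℝ B.transpose.mulVecLin.range = No := h1
      rw [h3] at h2
      simp only [Module.finrank_fin_fun] at h2
      rw [← LinearMap.ker_eq_bot]
      apply Submodule.finrank_eq_zero.mp
      omega
    have := hinjT (a₁ := fun j => G j k0) (a₂ := 0) (by rw [map_zero]; exact hker)
    exact hjk (congrFun this j0)
  -- choose the direction
  have hzz : 0 < z ⬝ᵥ z := by
    have : 0 ≤ z ⬝ᵥ z := Finset.sum_nonneg fun i _ => mul_self_nonneg _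
    exact lt_of_le_of_ne this fun h => hz0 (dotProduct_self_eq_zero.mp h.symm)
  obtain ⟨E, hE⟩ : ∃ E : Matrix (Fin No) (Fin M) ℝ, E = Matrix.vecMulVec (Pi.single j0 1) z :=
    ⟨_, rfl⟩
  obtain ⟨S, hS⟩ : ∃ S : ℝ, S = ∑ n, ∑ j, (E.mulVec (x n) j) ^ 2 := ⟨_, rfl⟩
  have hS0 : 0 ≤ S := by
    rw [hS]; positivity
  obtain ⟨s, hs⟩ : ∃ s : ℝ, s = -(S + 1) / (G j0 k0 * (z ⬝ᵥ z)) := ⟨_, rfl⟩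
  obtain ⟨D, hD⟩ : ∃ D : Matrix (Fin M) (Fin (K L)) ℝ,
    D = Matrix.vecMulVec z (Pi.single k0 s) := ⟨_, rfl⟩
  have hBD : B * D = 0 := by
    rw [hD, Matrix.mul_vecMulVec, hBz]
    simp
  have hED : ∑ j, ∑ k, (E * D) j k * G j k = -(S + 1) := by
    have : E * D = Matrix.single j0 k0 ((z ⬝ᵥ z) * s) := by
      rw [hE, hD, Matrix.vecMulVec_mul_vecMulVec]
      ext j k
      simp [Matrix.vecMulVec_apply, Matrix.single_apply, Pi.single_apply]
      grind
    rw [this]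
    simp only [Matrix.single_apply, ite_and, ite_mul, zero_mul]
    simp only [Finset.sum_ite_eq, Finset.mem_univ, if_true, Finset.sum_ite_irrel,
      Finset.sum_const_zero]
    rw [hs]
    field_simp
  refine ⟨(D, E), ?_⟩
  have h3 : (fun t : ℝ => R (A + t • (D, E).1, B + t • (D, E).2)) = _ :=
    funext fun t => hline (D, E) t
  show iteratedDeriv 2 (fun t : ℝ => R (A + t • (D, E).1, B + t • (D, E).2)) 0 < 0
  rw [h3]
  rw [aux_deriv2 (1 / (N:ℝ)) F
      (fun n j => B.mulVec (D.mulVec (v L n)) j + E.mulVec (x n) j)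
      (fun n j => E.mulVec (D.mulVec (v L n)) j)]
  refine mul_neg_of_pos_of_neg hNpos ?_
  have hsum : ∑ n, ∑ j, (2 * (B.mulVec (D.mulVec (v L n)) j + E.mulVec (x n) j) ^ 2 +
      4 * F n j * E.mulVec (D.mulVec (v L n)) j) = 2 * S + 4 * (-(S + 1)) := by
    rw [← hED, ← hGC, hS]
    simp only [Finset.mul_sum, ← Finset.sum_add_distrib]
    refine Finset.sum_congr rfl fun n _ => Finset.sum_congr rfl fun j _ => ?_
    rw [Matrix.mulVec_mulVec, hBD, Matrix.mulVec_mulVec]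
    simp
    ring
  rw [hsum]
  linarith
end

section
/- Suppose Assumption 2 holds (ℓ differentiable and convex in its first argument). Then for any choice of the dense functions Q_1,…,Q_L, every local minimizer (W_0*,…,W_L*) of the DenseNEst empirical risk D satisfies D(W_0*,…,W_L*) ≤ (1/N) Σ_{n=1}^N ℓ(A x^n, y^n) for every matrix A ∈ ℝ^{N_o×N_in}; that is, any local minimum of the DenseNEst empirical risk is smaller than or equal to the minimum empirical risk attainable by any linear predictor of the input. -/
/-!
STATEMENT 11 (Proposition 4): Under Assumption 2, for any choice of the dense
functions Q_1, …, Q_L, every local minimizer of the DenseNEst empirical risk is at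
least as good as the best linear predictor of the input.

The concatenation v_0 © v_1 © ⋯ © v_{i−1} ∈ ℝ^{M_{i−1}} is encoded as the dependent
tuple (v_0, …, v_{i−1}), so a dense function Q_i : ℝ^{M_{i−1}} → ℝ^{D_i} is encoded
as a function of this tuple.
-/

attribute [local instance] Matrix.normedAddCommGroup Matrix.normedSpace

theorem densenest_local_min_beats_linear_predictor
    (N L No : ℕ) (hN : 0 < N) (hL : 1 ≤ L) (hNo : 0 < No)
    -- growth dimensions D_0 = N_in, D_1, …, D_L ≥ 1
    (Dd : ℕ → ℕ) (hDd : ∀ i, 1 ≤ Dd i)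
    -- inputs x^n ∈ ℝ^{N_in} and targets y^n ∈ ℝ^{N_o}
    (x : Fin N → Fin (Dd 0) → ℝ)
    (y : Fin N → Fin No → ℝ)
    -- dense functions Q_i : ℝ^{M_{i−1}} → ℝ^{D_i} (on concatenations, as tuples)
    (Q : (i : ℕ) → ((j : Fin i) → Fin (Dd j.val) → ℝ) → Fin (Dd i) → ℝ)
    -- DenseNEst features: v_0^n = x^n, v_i^n = Q_i(v_0^n © ⋯ © v_{i−1}^n)
    (v : (i : ℕ) → Fin N → Fin (Dd i) → ℝ)
    (hv0 : ∀ n, v 0 n = x n)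
    (hv : ∀ i n, 1 ≤ i → i ≤ L → v i n = Q i (fun j : Fin i => v j.val n))
    -- the loss function
    (ℓ : (Fin No → ℝ) → (Fin No → ℝ) → ℝ)
    -- Assumption 2: ℓ(yhat, y) is differentiable and convex in yhat for every y
    (hdiff : ∀ yy, Differentiable ℝ (fun yhat => ℓ yhat yy))
    (hconv : ∀ yy, ConvexOn ℝ Set.univ (fun yhat => ℓ yhat yy))
    -- DenseNEst empirical risk
    (D : ((i : Fin (L + 1)) → Matrix (Fin No) (Fin (Dd i.val)) ℝ) → ℝ)
    (hD : ∀ Wp, D Wp =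
      (1 / (N : ℝ)) * ∑ n, ℓ (∑ i : Fin (L + 1), (Wp i).mulVec (v i.val n)) (y n))
    -- a local minimizer of D
    (Wp : (i : Fin (L + 1)) → Matrix (Fin No) (Fin (Dd i.val)) ℝ)
    (hWp : IsLocalMin D Wp) :
    ∀ A : Matrix (Fin No) (Fin (Dd 0)) ℝ,
      D Wp ≤ (1 / (N : ℝ)) * ∑ n, ℓ (A.mulVec (x n)) (y n) := by
  intro A
  have hc : ConvexOn ℝ Set.univ D := by
    refine ⟨convex_univ, ?_⟩
    intro U _ V _ a b ha hb hab
    have key : ∀ n, ℓ (∑ i : Fin (L + 1), ((a • U + b • V) i).mulVec (v i.val n)) (y n) ≤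
        a * ℓ (∑ i : Fin (L + 1), (U i).mulVec (v i.val n)) (y n) +
        b * ℓ (∑ i : Fin (L + 1), (V i).mulVec (v i.val n)) (y n) := by
      intro n
      have h := (hconv (y n)).2 (Set.mem_univ (∑ i : Fin (L + 1), (U i).mulVec (v i.val n)))
        (Set.mem_univ (∑ i : Fin (L + 1), (V i).mulVec (v i.val n))) ha hb hab
      have e : (∑ i : Fin (L + 1), ((a • U + b • V) i).mulVec (v i.val n)) =
          a • (∑ i : Fin (L + 1), (U i).mulVec (v i.val n)) +
          b • (∑ i : Fin (L + 1), (V i).mulVec (v i.val n)) := by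
        rw [Finset.smul_sum, Finset.smul_sum, ← Finset.sum_add_distrib]
        refine Finset.sum_congr rfl fun i _ => ?_
        rw [Pi.add_apply, Pi.smul_apply, Pi.smul_apply, Matrix.add_mulVec,
          Matrix.smul_mulVec, Matrix.smul_mulVec]
      rw [e]
      simpa only [smul_eq_mul] using h
    have hs := Finset.sum_le_sum fun n (_ : n ∈ (Finset.univ : Finset (Fin N))) => key n
    rw [Finset.sum_add_distrib, ← Finset.mul_sum, ← Finset.mul_sum] at hs
    have hN' : (0 : ℝ) ≤ 1 / (N : ℝ) := by positivity
    have := mul_le_mul_of_nonneg_left hs hN'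
    rw [hD, hD, hD, smul_eq_mul, smul_eq_mul]
    refine this.trans (le_of_eq ?_)
    ring
  have hmin := IsMinOn.of_isLocalMin_of_convex_univ hWp hc
    (Fin.cons (α := fun i : Fin (L + 1) => Matrix (Fin No) (Fin (Dd i.val)) ℝ) A (fun _ => 0))
  refine hmin.trans (le_of_eq ?_)
  rw [hD]
  congr 1
  refine Finset.sum_congr rfl fun n _ => ?_
  rw [Fin.sum_univ_succ, Finset.sum_eq_zero, add_zero]
  · exact congrArg (fun z => ℓ (A.mulVec z) (y n)) (hv0 n)
  · intro i _
    exact Matrix.zero_mulVec (v i.succ.val n)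
end

section
/- Given any DenseNEst, i.e., dense functions Q_i : ℝ^{M_{i−1}} → ℝ^{D_i} for i = 1,…,L and an output matrix V ∈ ℝ^{N_o×M_L} defining ŷ_DenseNEst(x) = V (x © Q_1-feature © ⋯ © Q_L-feature), there exist a residual dimension M (one may take M = M_L = N_in + D_1 + ⋯ + D_L), matrices W_0 ∈ ℝ^{M×N_in}, W_i ∈ ℝ^{M×D_i} for i = 1,…,L, functions G_i : ℝ^M → ℝ^{D_i} for i = 1,…,L, and a matrix W_{L+1} ∈ ℝ^{N_o×M} such that (i) the ResNEst defined by x_0 = W_0 x, x_i = x_{i−1} + W_i G_i(x_{i−1}) for i = 1,…,L, and output ŷ_ResNEst(x) = W_{L+1} x_L satisfies ŷ_ResNEst(x) = ŷ_DenseNEst(x) for all x ∈ ℝ^{N_in}, and (ii) the combined linear map (c_0, c_1, …, c_L) ↦ W_0 c_0 + Σ_{i=1}^L W_i c_i from ℝ^{N_in}×ℝ^{D_1}×⋯×ℝ^{D_L} to ℝ^M is injective (the columns of W_0,…,W_L can be taken mutually orthonormal). -/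
/-!
STATEMENT 12 (Proposition 5, first part): Given any DenseNEst, there exists a wide
ResNEst with bottleneck residual blocks computing exactly the same function, whose
weight matrices W_0, …, W_L form an injective combined linear map
(c_0, …, c_L) ↦ Σ_i W_i c_i (one may take M = M_L and mutually orthonormal columns).

The concatenation z_{i−1} = v_0 © ⋯ © v_{i−1} ∈ ℝ^{M_{i−1}} is encoded as the
dependent tuple (v_0, …, v_{i−1}), so a dense function Q_i : ℝ^{M_{i−1}} → ℝ^{D_i}
is encoded as a function of this tuple, and the DenseNEst output
V z_L = Σ_{i=0}^L V_i v_i is written via the block decomposition V_0, …, V_L of V.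
-/

theorem exists_orthonormal_blocks (L : ℕ) (Dd : ℕ → ℕ) :
    ∃ (M : ℕ) (W : (i : ℕ) → Matrix (Fin M) (Fin (Dd i)) ℝ),
      (∀ i, i ≤ L → (W i).transpose * W i = 1) ∧
      (∀ i j, i ≠ j → (W i).transpose * W j = 0) := by
  classical
  let e := Fintype.equivFin (Σ i : Fin (L + 1), Fin (Dd i.val))
  have hf : ∀ s, (e.symm (e s)).2.val = s.2.val := fun s =>
    congrArg (fun t : (Σ i : Fin (L + 1), Fin (Dd i.val)) => t.2.val) (e.symm_apply_apply s)
  refine ⟨_, fun i => Matrix.of fun m k =>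
    if (e.symm m).1.val = i ∧ (e.symm m).2.val = k.val then (1 : ℝ) else 0, ?_, ?_⟩
  · intro i hi
    ext a b
    rw [Matrix.mul_apply, ← e.sum_comp,
      Finset.sum_eq_single (⟨⟨i, Nat.lt_succ_of_le hi⟩, a⟩ : Σ i : Fin (L + 1), Fin (Dd i.val))]
    · simp [Matrix.one_apply, Fin.ext_iff, hf]
    · rintro ⟨⟨p, hp⟩, q⟩ _ hne
      have h : ¬ (p = i ∧ q.val = a.val) := by
        rintro ⟨rfl, h⟩
        exact hne (by rw [Fin.ext h])
      simp [hf]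
      tauto
    · simp
  · intro i j hij
    ext a b
    rw [Matrix.mul_apply]
    refine Finset.sum_eq_zero fun m _ => ?_
    simp only [Matrix.transpose_apply, Matrix.of_apply]
    by_cases h : (e.symm m).1.val = i
    · have h2 : (e.symm m).1.val ≠ j := fun h' => hij (h.symm.trans h')
      simp [h2]
    · simp [h]

theorem densenest_is_wide_bottleneck_resnest
    (L No : ℕ) (hL : 1 ≤ L) (hNo : 0 < No)
    -- growth dimensions D_0 = N_in, D_1, …, D_L ≥ 1
    (Dd : ℕ → ℕ) (hDd : ∀ i, 1 ≤ Dd i)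
    -- dense functions Q_i : ℝ^{M_{i−1}} → ℝ^{D_i} (on concatenations, as tuples)
    (Q : (i : ℕ) → ((j : Fin i) → Fin (Dd j.val) → ℝ) → Fin (Dd i) → ℝ)
    -- output matrix V ∈ ℝ^{N_o×M_L}, in block form V_0, …, V_L
    (V : (i : ℕ) → Matrix (Fin No) (Fin (Dd i)) ℝ)
    -- DenseNEst features of an input x: v_0(x) = x, v_i(x) = Q_i(v_0 © ⋯ © v_{i−1})
    (v : (i : ℕ) → (Fin (Dd 0) → ℝ) → Fin (Dd i) → ℝ)
    (hv0 : ∀ x, v 0 x = x)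
    (hv : ∀ i x, 1 ≤ i → i ≤ L → v i x = Q i (fun j : Fin i => v j.val x)) :
    -- there is an equivalent ResNEst: residual dimension M, weights W_i, residual
    -- functions G_i, output matrix W_{L+1}, and hidden states X_i with
    -- X_0 = W_0 x, X_i = X_{i−1} + W_i G_i(X_{i−1}), W_{L+1} X_L = DenseNEst output
    ∃ (M : ℕ) (W : (i : ℕ) → Matrix (Fin M) (Fin (Dd i)) ℝ)
      (G : (i : ℕ) → (Fin M → ℝ) → Fin (Dd i) → ℝ)
      (WL1 : Matrix (Fin No) (Fin M) ℝ)
      (X : ℕ → (Fin (Dd 0) → ℝ) → Fin M → ℝ),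
      (∀ x, X 0 x = (W 0).mulVec x) ∧
      (∀ i x, 1 ≤ i → i ≤ L →
        X i x = X (i - 1) x + (W i).mulVec (G i (X (i - 1) x))) ∧
      (∀ x, WL1.mulVec (X L x) =
        ∑ i ∈ Finset.range (L + 1), (V i).mulVec (v i x)) ∧
      Function.Injective
        (fun c : (i : Fin (L + 1)) → Fin (Dd i.val) → ℝ =>
          ∑ i : Fin (L + 1), (W i.val).mulVec (c i)) := by
  obtain ⟨M, W, h1, h0⟩ := exists_orthonormal_blocks L Dd
  have hP : ∀ (n i : ℕ) (c : (j : ℕ) → Fin (Dd j) → ℝ), i < n → i ≤ L →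
      (W i).transpose.mulVec (∑ j ∈ Finset.range n, (W j).mulVec (c j)) = c i := by
    intro n i c hin hiL
    rw [Matrix.mulVec_sum, Finset.sum_eq_single i]
    · rw [Matrix.mulVec_mulVec, h1 i hiL, Matrix.one_mulVec]
    · intro j _ hj
      rw [Matrix.mulVec_mulVec, h0 i j hj.symm, Matrix.zero_mulVec]
    · intro h
      exact absurd (Finset.mem_range.2 hin) h
  refine ⟨M, W, fun i y => Q i (fun j : Fin i => (W j.val).transpose.mulVec y),
    ∑ i ∈ Finset.range (L + 1), V i * (W i).transpose,
    fun i x => ∑ j ∈ Finset.range (i + 1), (W j).mulVec (v j x), ?_, ?_, ?_, ?_⟩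
  · intro x
    simp [hv0]
  · intro i x hi hiL
    obtain ⟨k, rfl⟩ : ∃ k, i = k + 1 := ⟨i - 1, by omega⟩
    simp only [Nat.add_sub_cancel]
    rw [Finset.sum_range_succ _ (k + 1), hv (k + 1) x hi hiL]
    congr 3
    funext j
    exact (hP (k + 1) j.val (fun j => v j x) j.isLt (by omega)).symm
  · intro x
    rw [Matrix.sum_mulVec]
    refine Finset.sum_congr rfl fun i hi => ?_
    have hi' := Finset.mem_range.1 hi
    rw [← Matrix.mulVec_mulVec, hP (L + 1) i (fun j => v j x) hi' (by omega)]
  · intro c d hcd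
    have key : ∀ (c : (i : Fin (L + 1)) → Fin (Dd i.val) → ℝ) (i : Fin (L + 1)),
        (W i.val).transpose.mulVec (∑ j : Fin (L + 1), (W j.val).mulVec (c j)) = c i := by
      intro c i
      rw [Matrix.mulVec_sum, Finset.sum_eq_single i]
      · rw [Matrix.mulVec_mulVec, h1 i.val (by omega), Matrix.one_mulVec]
      · intro j _ hj
        rw [Matrix.mulVec_mulVec, h0 i.val j.val (fun h => hj (Fin.ext h.symm)),
          Matrix.zero_mulVec]
      · simp
    funext i
    rw [← key c i, ← key d i]
    exact congrArg _ hcd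
end

section
/- Let 1 ≤ i ≤ L and suppose the feature v_i is linearly predictable from the earlier features on the data: there exist matrices C_j ∈ ℝ^{K_i×K_j} for j = 0,…,i−1 such that v_i^n = Σ_{j=0}^{i−1} C_j v_j^n for every n = 1,…,N. Then the best A-ResNEst risk using the first i+1 features equals the best A-ResNEst risk using only the first i features: the infimum over (H_0,…,H_i) ∈ ℝ^{N_o×K_0}×⋯×ℝ^{N_o×K_i} of (1/N) Σ_{n=1}^N ℓ(Σ_{j=0}^{i} H_j v_j^n, y^n) equals the infimum over (H_0,…,H_{i−1}) of (1/N) Σ_{n=1}^N ℓ(Σ_{j=0}^{i−1} H_j v_j^n, y^n). Consequently, a strict improvement of the residual representation at block i requires v_i to be linearly unpredictable from v_0,…,v_{i−1}. -/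
/-!
STATEMENT 13: If the feature v_i is linearly predictable from v_0, …, v_{i−1} on the
data, then the best A-ResNEst risk using the first i+1 features equals the best
A-ResNEst risk using only the first i features, i.e., the residual representation is
not strictly improved at block i.
-/

theorem aresnest_linearly_predictable_feature_no_improvement
    (N L No : ℕ) (hN : 0 < N) (hL : 1 ≤ L) (hNo : 0 < No)
    (K : ℕ → ℕ)
    -- feature vectors v_j^n ∈ ℝ^{K_j} and targets y^n ∈ ℝ^{N_o}
    (v : (j : ℕ) → Fin N → Fin (K j) → ℝ)
    (y : Fin N → Fin No → ℝ)
    -- the loss function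
    (ℓ : (Fin No → ℝ) → (Fin No → ℝ) → ℝ)
    -- a block index 1 ≤ i ≤ L
    (i : ℕ) (hi1 : 1 ≤ i) (hiL : i ≤ L)
    -- v_i is linearly predictable from v_0, …, v_{i−1} on the data:
    -- v_i^n = Σ_{j=0}^{i−1} C_j v_j^n for all n
    (C : (j : ℕ) → Matrix (Fin (K i)) (Fin (K j)) ℝ)
    (hpred : ∀ n, v i n = ∑ j ∈ Finset.range i, (C j).mulVec (v j n)) :
    (⨅ H : (j : Fin (i + 1)) → Matrix (Fin No) (Fin (K j.val)) ℝ,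
        (1 / (N : ℝ)) * ∑ n, ℓ (∑ j : Fin (i + 1), (H j).mulVec (v j.val n)) (y n))
      = ⨅ H : (j : Fin i) → Matrix (Fin No) (Fin (K j.val)) ℝ,
        (1 / (N : ℝ)) * ∑ n, ℓ (∑ j : Fin i, (H j).mulVec (v j.val n)) (y n) := by
  have key : ∀ (A : Matrix (Fin No) (Fin (K i)) ℝ) (n : Fin N),
      A.mulVec (v i n) = ∑ j : Fin i, (A * C j.val).mulVec (v j.val n) := by
    intro A n
    rw [hpred n, Finset.sum_range, Matrix.mulVec_sum]
    simp only [Matrix.mulVec_mulVec]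
  let g : ((j : Fin (i + 1)) → Matrix (Fin No) (Fin (K j.val)) ℝ) →
      ((j : Fin i) → Matrix (Fin No) (Fin (K j.val)) ℝ) := fun H j =>
    (show Matrix (Fin No) (Fin (K j.val)) ℝ from H j.castSucc) +
      (show Matrix (Fin No) (Fin (K i)) ℝ from H (Fin.last i)) * C j.val
  have hg : Function.Surjective g := by
    intro H'
    refine ⟨Fin.lastCases (motive := fun j : Fin (i + 1) =>
      Matrix (Fin No) (Fin (K j.val)) ℝ) (0 : Matrix (Fin No) (Fin (K i)) ℝ)
      (fun j => H' j), ?_⟩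
    funext j
    simp only [g, Fin.lastCases_castSucc, Fin.lastCases_last]
    erw [Matrix.zero_mul, add_zero]
  refine hg.iInf_congr g ?_
  intro H
  congr 1
  refine Finset.sum_congr rfl fun n _ => ?_
  congr 1
  rw [Fin.sum_univ_castSucc]
  have h2 := key (H (Fin.last i)) n
  simp only [g, Matrix.add_mulVec, Finset.sum_add_distrib]
  exact congrArg₂ (· + ·) rfl h2.symm
end
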